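/- arXiv:math/9406204 — 6 statements merged into one kernel-verified Lean document; each statement's English description precedes it below -/
import Mathlib

section
/- Let G be a group, let u, v, w be elements of G, and let S be a set of elements of G. Then the normal closure of S ∪ {u * v, w * v} equals the normal closure of S ∪ {u * v, w * u⁻¹}. That is, if one relator has the form u * v and another has the form w * v, the second may be replaced by w * u⁻¹ (substituting the equivalent string u⁻¹ for the common substring v) without changing the group presented. -/
theorem insert_mul_subset_iff_of_mem_normalClosure {G : Type*} [Group G] {T : Set G} {b : G}
    (hb : b ∈ Subgroup.normalClosure T) (a : G) (N : Subgroup G) [N.Normal] :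
    insert (a * b) T ⊆ (N : Set G) ↔ insert a T ⊆ (N : Set G) := by
  simp only [Set.insert_subset_iff, SetLike.mem_coe]
  exact and_congr_left fun hT => N.mul_mem_cancel_right (Subgroup.normalClosure_le_normal hT hb)

theorem normalClosure_insert_mul_of_mem {G : Type*} [Group G] {T : Set G} {b : G}
    (hb : b ∈ Subgroup.normalClosure T) (a : G) :
    Subgroup.normalClosure (insert (a * b) T) = Subgroup.normalClosure (insert a T) := by
  apply le_antisymm <;> apply Subgroup.normalClosure_le_normal
  · exact (insert_mul_subset_iff_of_mem_normalClosure hb a _).2 Subgroup.subset_normalClosure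
  · exact (insert_mul_subset_iff_of_mem_normalClosure hb a _).1 Subgroup.subset_normalClosure

theorem normalClosure_substring_replacement {G : Type*} [Group G] (u v w : G) (S : Set G) :
    Subgroup.normalClosure (S ∪ {u * v, w * v}) =
      Subgroup.normalClosure (S ∪ {u * v, w * u⁻¹}) := by
  have union_pair (x : G) : S ∪ {u * v, x} = insert x (insert (u * v) S) := by
    rw [Set.pair_comm, Set.union_insert, Set.union_singleton]
  have huv : u * v ∈ Subgroup.normalClosure (insert (u * v) S) :=
    Subgroup.subset_normalClosure (Set.mem_insert _ _)
  have factor : w * v = w * u⁻¹ * (u * v) := by group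
  rw [union_pair, union_pair, factor, normalClosure_insert_mul_of_mem huv]
end

section
/- Let m be a positive natural number and define the hash h : ℤ × ℤ → ℕ by h(a, b) = (a - b).natAbs % m. Let L be a list of integers and let L' = (L.map (fun x => -x)).reverse be its formal inverse. Then the multiset of hash values of the cyclic adjacent pairs of L equals the multiset of hash values of the cyclic adjacent pairs of L': Multiset.map h (L.zip (L.rotate 1)) = Multiset.map h (L'.zip (L'.rotate 1)). In particular h itself satisfies h(-b, -a) = h(a, b) for all integers a, b. -/
/-!
Reading a cyclic word backwards lists its adjacent pairs in the opposite cyclic order, with the two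
entries of every pair exchanged. Formal inversion therefore replaces each pair `(a, b)` by
`(-b, -a)`, and the hash takes the same value on both.
-/

section CyclicPairs

variable {α β : Type*}

/-- The adjacent pairs of `l` read as a cyclic word, from which hashed 2-signatures are built.
The final pair joins the last letter to the first; in particular `[a]` has the pair `(a, a)`. -/
def cyclicPairs (l : List α) : List (α × α) :=
  l.zip (l.rotate 1)

theorem cyclicPairs_map (f : α → β) (l : List α) :
    cyclicPairs (l.map f) = (cyclicPairs l).map (Prod.map f f) := by
  rw [cyclicPairs, ← List.map_rotate, List.zip_map, cyclicPairs]

theorem rotate_one_reverse_rotate_one (l : List α) :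
    (l.rotate 1).reverse.rotate 1 = l.reverse := by
  cases l <;> simp

theorem cyclicPairs_reverse (l : List α) :
    cyclicPairs l.reverse = ((cyclicPairs l).map Prod.swap).reverse.rotate 1 := by
  symm
  calc ((cyclicPairs l).map Prod.swap).reverse.rotate 1
      = ((l.rotate 1).zip l).reverse.rotate 1 := by rw [cyclicPairs, List.zip_swap]
    _ = ((l.rotate 1).reverse.zip l.reverse).rotate 1 :=
        congrArg (List.rotate · 1) (List.reverse_zipWith (l.length_rotate 1))
    _ = ((l.rotate 1).reverse.rotate 1).zip (l.reverse.rotate 1) :=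
        List.zipWith_rotate_distrib Prod.mk _ _ 1 (by simp)
    _ = cyclicPairs l.reverse := by rw [rotate_one_reverse_rotate_one, cyclicPairs]

theorem cyclicPairs_reverse_perm (l : List α) :
    (cyclicPairs l.reverse).Perm ((cyclicPairs l).map Prod.swap) := by
  rw [cyclicPairs_reverse]
  exact (List.rotate_perm _ 1).trans (List.reverse_perm _)

theorem cyclicPairs_reverse_map_perm (σ : α → β) (l : List α) :
    (cyclicPairs (l.map σ).reverse).Perm ((cyclicPairs l).map fun p => (σ p.2, σ p.1)) := by
  have h := cyclicPairs_reverse_perm (l.map σ)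
  rwa [cyclicPairs_map, List.map_map] at h

theorem hash_inversion_invariant_general {σ : α → α} {h : α × α → β}
    (h_inv : ∀ a b, h (σ b, σ a) = h (a, b)) (L : List α) :
    Multiset.map h ↑(cyclicPairs L) = Multiset.map h ↑(cyclicPairs (L.map σ).reverse) := by
  rw [Multiset.coe_eq_coe.mpr (cyclicPairs_reverse_map_perm σ L), ← Multiset.map_coe,
    Multiset.map_map]
  exact Multiset.map_congr rfl fun p _ => (h_inv p.1 p.2).symm

end CyclicPairs

theorem hash_inversion_invariant (m : ℕ) (hm : 0 < m) (L : List ℤ) :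
    (Multiset.map (fun p : ℤ × ℤ => (p.1 - p.2).natAbs % m) ↑(L.zip (L.rotate 1)) =
      Multiset.map (fun p : ℤ × ℤ => (p.1 - p.2).natAbs % m)
        ↑(((L.map fun x => -x).reverse).zip (((L.map fun x => -x).reverse).rotate 1))) ∧
    ∀ a b : ℤ, ((-b) - (-a)).natAbs % m = (a - b).natAbs % m := by
  have hash_neg (a b : ℤ) : ((-b) - (-a)).natAbs % m = (a - b).natAbs % m := by
    rw [neg_sub_neg]
  exact ⟨hash_inversion_invariant_general hash_neg L, hash_neg⟩
end

section
/- The Fibonacci group F(2,9), presented with nine generators x₁, ..., x₉ and the nine relators xᵢ xᵢ₊₁ xᵢ₊₂⁻¹ (indices taken cyclically modulo 9), is isomorphic to the group presented with two generators a, b and the two relators b·a·b·a·b²·a·b²·a⁻¹·b·a⁻²·b·a⁻² and a·b²·a·b²·a·b·a·b²·a·b·a²·b⁻¹·a·b⁻¹. -/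
/-- Relators of the Fibonacci group F(2,9) on nine generators:
    xᵢ xᵢ₊₁ xᵢ₊₂⁻¹ with indices cyclic modulo 9. -/
def fibNineRels : Set (FreeGroup (Fin 9)) :=
  Set.range fun i : Fin 9 =>
    FreeGroup.of i * FreeGroup.of (i + 1) * (FreeGroup.of (i + 2))⁻¹

/-- Relators of the two-generator presentation of F(2,9), with a = of 0, b = of 1. -/
def fibTwoRels : Set (FreeGroup (Fin 2)) :=
  let a : FreeGroup (Fin 2) := FreeGroup.of 0
  let b : FreeGroup (Fin 2) := FreeGroup.of 1
  {b * a * b * a * b ^ 2 * a * b ^ 2 * a⁻¹ * b * (a ^ 2)⁻¹ * b * (a ^ 2)⁻¹,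
   a * b ^ 2 * a * b ^ 2 * a * b * a * b ^ 2 * a * b * a ^ 2 * b⁻¹ * a * b⁻¹}

/-!
A cyclic family `x` of length `n` satisfying the Fibonacci recursion is the same as a pair
`a = x 0`, `b = x 1` whose Fibonacci sequence `w` is `n`-periodic, and periodicity amounts to
`w n = a` and `w (n + 1) = b`. The recursion can be solved backwards, so for `n = m + 4` these two
equations are equivalent to `w m = a² b⁻¹ a² b⁻¹ a b⁻¹` and `w (m + 1) = b a⁻¹ b a⁻²`. With `w 5`
and `w 6` written out, the case `m = 5` gives the two relators of the short presentation of
`F(2,9)`.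
-/

/-- The Fibonacci sequence in a group (or magma) with first terms `a` and `b`, indexed from `0`. -/
def fibSeq {M : Type*} [Mul M] (a b : M) : ℕ → M
  | 0 => a
  | 1 => b
  | k + 2 => fibSeq a b k * fibSeq a b (k + 1)

/-- A family indexed cyclically modulo `n` satisfying the Fibonacci recursion; in a group,
these are the images of the standard generators of the Fibonacci group `F(2,n)` under a
homomorphism. -/
def IsFibonacciCycle {n : ℕ} [NeZero n] {M : Type*} [Mul M] (x : Fin n → M) : Prop :=
  ∀ i, x i * x (i + 1) = x (i + 2)

/-- The relators `xᵢ xᵢ₊₁ xᵢ₊₂⁻¹`, indices modulo `n`, of the Fibonacci group `F(2,n)`. -/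
def fibRels (n : ℕ) [NeZero n] : Set (FreeGroup (Fin n)) :=
  Set.range fun i => .of i * .of (i + 1) * (.of (i + 2))⁻¹

/-- The relators of a presentation of `F(2,n+4)` on two generators `a = of 0` and `b = of 1`: they
equate the `n`-th and `(n+1)`-st terms of the Fibonacci sequence with the words obtained by running
the recursion four steps backwards from `a, b`. -/
def fibTwoGenRels (n : ℕ) : Set (FreeGroup (Fin 2)) :=
  let a : FreeGroup (Fin 2) := .of 0
  let b : FreeGroup (Fin 2) := .of 1
  {fibSeq a b n * (b * a⁻¹ * b * (a ^ 2)⁻¹ * b * (a ^ 2)⁻¹),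
   fibSeq a b (n + 1) * (a ^ 2 * b⁻¹ * a * b⁻¹)}

section FibonacciSequence

variable {M N : Type*} [Mul M] [Mul N] {a b : M}

theorem fibSeq_add_two (a b : M) (k : ℕ) :
    fibSeq a b (k + 2) = fibSeq a b k * fibSeq a b (k + 1) := rfl

theorem map_fibSeq {F : Type*} [FunLike F M N] [MulHomClass F M N] (f : F) (a b : M) (k : ℕ) :
    f (fibSeq a b k) = fibSeq (f a) (f b) k := by
  induction k using Nat.twoStepInduction with
  | zero | one => rfl
  | more k ih₀ ih₁ => rw [fibSeq_add_two, map_mul, ih₀, ih₁, fibSeq_add_two]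

theorem periodic_fibSeq_iff {n : ℕ} :
    Function.Periodic (fibSeq a b) n ↔ fibSeq a b n = a ∧ fibSeq a b (n + 1) = b := by
  refine ⟨fun h => ⟨h.eq, (congrArg _ (add_comm n 1)).trans (h 1)⟩, fun ⟨h₀, h₁⟩ k => ?_⟩
  induction k using Nat.twoStepInduction with
  | zero => rw [zero_add, h₀, fibSeq]
  | one => rw [add_comm, h₁, fibSeq]
  | more k ih₀ ih₁ =>
    rw [add_right_comm, fibSeq_add_two, add_right_comm, ih₀, ih₁, fibSeq_add_two]

end FibonacciSequence

section BackwardRecursion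

variable {G : Type*} [Group G] {a b : G}

theorem fibSeq_succ_eq_and_add_two_eq_iff (k : ℕ) (y z : G) :
    fibSeq a b (k + 1) = y ∧ fibSeq a b (k + 2) = z ↔
      fibSeq a b k = z * y⁻¹ ∧ fibSeq a b (k + 1) = y := by
  rw [fibSeq_add_two, and_comm]
  refine and_congr_left fun h => ?_
  rw [h, eq_mul_inv_iff_mul_eq]

theorem periodic_fibSeq_add_four_iff {n : ℕ} :
    Function.Periodic (fibSeq a b) (n + 4) ↔
      fibSeq a b n * (b * a⁻¹ * b * (a ^ 2)⁻¹ * b * (a ^ 2)⁻¹) = 1 ∧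
        fibSeq a b (n + 1) * (a ^ 2 * b⁻¹ * a * b⁻¹) = 1 := by
  rw [periodic_fibSeq_iff]
  iterate 4 rw [fibSeq_succ_eq_and_add_two_eq_iff]
  rw [mul_eq_one_iff_eq_inv, mul_eq_one_iff_eq_inv]
  simp only [mul_inv_rev, inv_inv, pow_two, mul_assoc]

end BackwardRecursion

namespace IsFibonacciCycle

variable {n : ℕ} [NeZero n] {M : Type*} [Mul M] {x : Fin n → M}

theorem apply_ofNat (hx : IsFibonacciCycle x) (k : ℕ) :
    x (Fin.ofNat n k) = fibSeq (x 0) (x 1) k := by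
  induction k using Nat.twoStepInduction with
  | zero | one => rfl
  | more k ih₀ ih₁ =>
    have ofNat_succ : Fin.ofNat n (k + 1) = Fin.ofNat n k + 1 := by
      simp [Fin.ext_iff, Fin.val_add]
    have ofNat_add_two : Fin.ofNat n (k + 2) = Fin.ofNat n k + 2 := by
      simp [Fin.ext_iff, Fin.val_add]
    rw [ofNat_add_two, ← hx, ← ofNat_succ, ih₀, ih₁, fibSeq_add_two]

theorem periodic_fibSeq (hx : IsFibonacciCycle x) :
    Function.Periodic (fibSeq (x 0) (x 1)) n := fun k => by
  have ofNat_add_self : Fin.ofNat n (k + n) = Fin.ofNat n k := by simp [Fin.ext_iff]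
  rw [← hx.apply_ofNat, ← hx.apply_ofNat, ofNat_add_self]

end IsFibonacciCycle

theorem isFibonacciCycle_of_periodic_fibSeq {n : ℕ} [NeZero n] {M : Type*} [Mul M] {a b : M}
    (h : Function.Periodic (fibSeq a b) n) :
    IsFibonacciCycle fun i : Fin n => fibSeq a b i := fun i => by
  have val_succ : ((i + 1 : Fin n) : ℕ) = (i + 1) % n := by simp [Fin.val_add]
  have val_add_two : ((i + 2 : Fin n) : ℕ) = (i + 2) % n := by simp [Fin.val_add]
  simp only [val_succ, val_add_two, h.map_mod_nat, fibSeq_add_two]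

section Relators

theorem forall_lift_presentedGroup_of_eq_one {α : Type*} {R : Set (FreeGroup α)} :
    ∀ r ∈ R, FreeGroup.lift (PresentedGroup.of (rels := R)) r = 1 := fun r hr => by
  have lift_of : FreeGroup.lift PresentedGroup.of = PresentedGroup.mk R :=
    FreeGroup.ext_hom _ _ fun _ => FreeGroup.lift_apply_of
  rw [lift_of, PresentedGroup.one_of_mem hr]

variable {G : Type*} [Group G]

theorem forall_lift_fibRels_eq_one_iff {n : ℕ} [NeZero n] {x : Fin n → G} :
    (∀ r ∈ fibRels n, FreeGroup.lift x r = 1) ↔ IsFibonacciCycle x := by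
  simp only [fibRels, Set.forall_mem_range, map_mul, map_inv, FreeGroup.lift_apply_of,
    mul_inv_eq_one, IsFibonacciCycle]

theorem forall_lift_fibTwoGenRels_eq_one_iff {n : ℕ} {f : Fin 2 → G} :
    (∀ r ∈ fibTwoGenRels n, FreeGroup.lift f r = 1) ↔
      Function.Periodic (fibSeq (f 0) (f 1)) (n + 4) := by
  simp only [fibTwoGenRels, Set.forall_mem_insert, Set.mem_singleton_iff, forall_eq, map_mul,
    map_inv, map_pow, map_fibSeq, FreeGroup.lift_apply_of, periodic_fibSeq_add_four_iff]

end Relators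

theorem fib_nine_iso_two_general (n : ℕ) :
    Nonempty (PresentedGroup (fibRels (n + 4)) ≃* PresentedGroup (fibTwoGenRels n)) := by
  let x : Fin (n + 4) → PresentedGroup (fibRels (n + 4)) := PresentedGroup.of
  let a : PresentedGroup (fibTwoGenRels n) := PresentedGroup.of 0
  let b : PresentedGroup (fibTwoGenRels n) := PresentedGroup.of 1
  have hx : IsFibonacciCycle x :=
    forall_lift_fibRels_eq_one_iff.mp forall_lift_presentedGroup_of_eq_one
  have hab : Function.Periodic (fibSeq a b) (n + 4) :=
    forall_lift_fibTwoGenRels_eq_one_iff.mp forall_lift_presentedGroup_of_eq_one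
  let toTwoGen := PresentedGroup.toGroup
    (forall_lift_fibRels_eq_one_iff.mpr (isFibonacciCycle_of_periodic_fibSeq hab))
  let ofTwoGen := PresentedGroup.toGroup
    (forall_lift_fibTwoGenRels_eq_one_iff (f := ![x 0, x 1]).mpr hx.periodic_fibSeq)
  refine ⟨MonoidHom.toMulEquiv toTwoGen ofTwoGen ?_ ?_⟩
  · ext i
    calc ofTwoGen (toTwoGen (x i)) = ofTwoGen (fibSeq a b i) := by simp [toTwoGen, x]
      _ = fibSeq (x 0) (x 1) i := by simp [map_fibSeq, ofTwoGen, a, b]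
      _ = x i := by rw [← hx.apply_ofNat, Fin.ofNat_val_eq_self]
  · ext i
    fin_cases i <;> simp [toTwoGen, ofTwoGen, x, a, b, fibSeq]

theorem fib_nine_iso_two :
    Nonempty (PresentedGroup fibNineRels ≃* PresentedGroup fibTwoRels) := by
  have hTwo : fibTwoRels = fibTwoGenRels 5 := by
    simp only [fibTwoRels, fibTwoGenRels, fibSeq, pow_two, mul_assoc]
  rw [hTwo]
  exact fib_nine_iso_two_general 5
end

section
/- The Fibonacci group F(2,9), presented with nine generators x₁, ..., x₉ and the nine relators xᵢ xᵢ₊₁ xᵢ₊₂⁻¹ (indices taken cyclically modulo 9), is isomorphic to the group presented with six generators a, b, d, e, g, h and the six relators b·a·b·d⁻¹, a·b·d·e⁻¹, e·d·e·g⁻¹, d·e·g·h⁻¹, h·g·h·a⁻¹, and g·h·a·b⁻¹. -/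
/-- Relators of the six-generator presentation of F(2,9), with generators
    a, b, d, e, g, h indexed by 0, 1, 2, 3, 4, 5. -/
def fibSixRels : Set (FreeGroup (Fin 6)) :=
  let a : FreeGroup (Fin 6) := FreeGroup.of 0
  let b : FreeGroup (Fin 6) := FreeGroup.of 1
  let d : FreeGroup (Fin 6) := FreeGroup.of 2
  let e : FreeGroup (Fin 6) := FreeGroup.of 3
  let g : FreeGroup (Fin 6) := FreeGroup.of 4
  let h : FreeGroup (Fin 6) := FreeGroup.of 5
  {b * a * b * d⁻¹, a * b * d * e⁻¹, e * d * e * g⁻¹,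
   d * e * g * h⁻¹, h * g * h * a⁻¹, g * h * a * b⁻¹}

/-!
Call the nine generators `a, ..., i`. The cyclic relations split into the chain `ab = c`, `bc = d`,
`cd = e` and its shifts by three and six places. In each chain the first relation determines the
eliminated generator, and substituting it turns the other two into `bab = d` and `abd = e`. Hence,
in any group, a solution of the nine relations is the same as a solution of the six relations
together with the values of the words `ab`, `de`, `gh` on it. Applied to the tautological solutions
in the two presented groups, this yields mutually inverse homomorphisms.
-/

section Elimination

variable {α β : Type*} {R : Set (FreeGroup α)} {S : Set (FreeGroup β)}

/-- Tietze elimination of redundant generators: `kept` embeds the generators that survive, and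
`word i` expresses the generator `i` in terms of them. -/
def presentedGroupMulEquivOfElimination (kept : β → α) (word : α → FreeGroup β)
    (word_kept : ∀ j, word (kept j) = FreeGroup.of j)
    (lift_word : ∀ r ∈ R, FreeGroup.lift (PresentedGroup.mk S ∘ word) r = 1)
    (lift_kept : ∀ s ∈ S, FreeGroup.lift (PresentedGroup.of (rels := R) ∘ kept) s = 1)
    (lift_kept_word : ∀ i,
      FreeGroup.lift (PresentedGroup.of (rels := R) ∘ kept) (word i) = PresentedGroup.of i) :
    PresentedGroup R ≃* PresentedGroup S :=
  (PresentedGroup.toGroup lift_word).toMulEquiv (PresentedGroup.toGroup lift_kept)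
    (PresentedGroup.ext fun i ↦ by
      rw [MonoidHom.comp_apply, PresentedGroup.toGroup.of]
      exact lift_kept_word i)
    (PresentedGroup.ext fun j ↦ by
      rw [MonoidHom.comp_apply, PresentedGroup.toGroup.of, Function.comp_apply,
        PresentedGroup.toGroup.of, Function.comp_apply, word_kept]
      rfl)

theorem lift_presentedGroup_of :
    FreeGroup.lift (PresentedGroup.of (rels := R)) = PresentedGroup.mk R :=
  FreeGroup.ext_hom _ _ fun _ ↦ FreeGroup.lift_apply_of

end Elimination

theorem mul_chain_iff {M : Type*} [Semigroup M] {a b c d e : M} :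
    (a * b = c ∧ b * c = d ∧ c * d = e) ↔ a * b = c ∧ b * a * b = d ∧ a * b * d = e := by
  refine and_congr_right ?_
  rintro rfl
  rw [mul_assoc b a b]

section Solutions

variable {G : Type*} [Group G]

theorem lift_fibNineRels_eq_one_iff {y : Fin 9 → G} :
    (∀ r ∈ fibNineRels, FreeGroup.lift y r = 1) ↔ ∀ i, y i * y (i + 1) = y (i + 2) := by
  simp only [fibNineRels, Set.forall_mem_range, map_mul, map_inv, FreeGroup.lift_apply_of,
    mul_inv_eq_one]

theorem lift_fibSixRels_eq_one_iff {x : Fin 6 → G} :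
    (∀ s ∈ fibSixRels, FreeGroup.lift x s = 1) ↔
      (x 1 * x 0 * x 1 = x 2 ∧ x 0 * x 1 * x 2 = x 3) ∧
      (x 3 * x 2 * x 3 = x 4 ∧ x 2 * x 3 * x 4 = x 5) ∧
      (x 5 * x 4 * x 5 = x 0 ∧ x 4 * x 5 * x 0 = x 1) := by
  simp only [fibSixRels, Set.mem_insert_iff, Set.mem_singleton_iff, forall_eq_or_imp, forall_eq,
    map_mul, map_inv, FreeGroup.lift_apply_of, mul_inv_eq_one, and_assoc]

/-- The generators of `F(2,9)` that survive the eliminations, in the order `a, b, d, e, g, h`. -/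
def keptGenerator : Fin 6 → Fin 9 := ![0, 1, 3, 4, 6, 7]

/-- The generators of `F(2,9)` as words in `a, b, d, e, g, h`: the eliminated ones are
`c = ab`, `f = de` and `i = gh`. -/
def fibWord : Fin 9 → FreeGroup (Fin 6) :=
  ![.of 0, .of 1, .of 0 * .of 1, .of 2, .of 3, .of 2 * .of 3, .of 4, .of 5, .of 4 * .of 5]

theorem fibWord_keptGenerator (j : Fin 6) : fibWord (keptGenerator j) = FreeGroup.of j := by
  fin_cases j <;> rfl

theorem lift_fibWord_eq_iff {y : Fin 9 → G} :
    (∀ i, FreeGroup.lift (y ∘ keptGenerator) (fibWord i) = y i) ↔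
      y 0 * y 1 = y 2 ∧ y 3 * y 4 = y 5 ∧ y 6 * y 7 = y 8 := by
  simp [Fin.forall_fin_succ, fibWord, keptGenerator]

theorem lift_fibNineRels_eq_one_iff_fibSixRels {y : Fin 9 → G} :
    (∀ r ∈ fibNineRels, FreeGroup.lift y r = 1) ↔
      (∀ i, FreeGroup.lift (y ∘ keptGenerator) (fibWord i) = y i) ∧
        ∀ s ∈ fibSixRels, FreeGroup.lift (y ∘ keptGenerator) s = 1 := by
  have three_chains : (∀ i, y i * y (i + 1) = y (i + 2)) ↔
      (y 0 * y 1 = y 2 ∧ y 1 * y 2 = y 3 ∧ y 2 * y 3 = y 4) ∧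
      (y 3 * y 4 = y 5 ∧ y 4 * y 5 = y 6 ∧ y 5 * y 6 = y 7) ∧
      (y 6 * y 7 = y 8 ∧ y 7 * y 8 = y 0 ∧ y 8 * y 0 = y 1) := by
    simp [Fin.forall_fin_succ, and_assoc]
  rw [lift_fibNineRels_eq_one_iff, three_chains, mul_chain_iff, mul_chain_iff, mul_chain_iff,
    lift_fibWord_eq_iff, lift_fibSixRels_eq_one_iff]
  change _ ↔ (_ ∧ _ ∧ _) ∧
    (y 1 * y 0 * y 1 = y 3 ∧ y 0 * y 1 * y 3 = y 4) ∧
    (y 4 * y 3 * y 4 = y 6 ∧ y 3 * y 4 * y 6 = y 7) ∧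
    (y 7 * y 6 * y 7 = y 0 ∧ y 6 * y 7 * y 0 = y 1)
  tauto

end Solutions

theorem fib_nine_iso_six :
    Nonempty (PresentedGroup fibNineRels ≃* PresentedGroup fibSixRels) := by
  obtain ⟨eliminated_eq_word, six_relations⟩ :=
    lift_fibNineRels_eq_one_iff_fibSixRels (y := PresentedGroup.of (rels := fibNineRels)).1 <| by
      rw [lift_presentedGroup_of]
      exact fun _ ↦ PresentedGroup.one_of_mem
  have mk_fibWord_kept : (PresentedGroup.mk fibSixRels ∘ fibWord) ∘ keptGenerator =
      PresentedGroup.of :=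
    funext fun j ↦ congrArg (PresentedGroup.mk fibSixRels) (fibWord_keptGenerator j)
  have nine_relations : ∀ r ∈ fibNineRels,
      FreeGroup.lift (PresentedGroup.mk fibSixRels ∘ fibWord) r = 1 := by
    rw [lift_fibNineRels_eq_one_iff_fibSixRels, mk_fibWord_kept, lift_presentedGroup_of]
    exact ⟨fun _ ↦ rfl, fun _ ↦ PresentedGroup.one_of_mem⟩
  exact ⟨presentedGroupMulEquivOfElimination keptGenerator fibWord fibWord_keptGenerator
    nine_relations six_relations eliminated_eq_word⟩
end

section
/- In the Janko simple group J₂ given by the presentation with generators a, b, c and relators a³, b³, c³, a·b·a·(b·a·b)⁻¹, (c·a)⁵, (c·b)⁵, (c·b⁻¹·c·b)², a⁻¹·b·a·c·a⁻¹·b·a·(b·a·c)⁻¹·a·c⁻¹, and a·b·a⁻¹·c·a·b·(c·a)⁻¹·a·b⁻¹·(c·a)⁻¹, the subgroup generated by a, b, and (c·a⁻¹·c)⁻¹·b·(c·a⁻¹·c) has index 100. -/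
/-- Relators of the given presentation of the Janko simple group J₂,
    with generators a, b, c indexed by 0, 1, 2. -/
def jankoRels : Set (FreeGroup (Fin 3)) :=
  let a : FreeGroup (Fin 3) := FreeGroup.of 0
  let b : FreeGroup (Fin 3) := FreeGroup.of 1
  let c : FreeGroup (Fin 3) := FreeGroup.of 2
  {a ^ 3, b ^ 3, c ^ 3, a * b * a * (b * a * b)⁻¹, (c * a) ^ 5, (c * b) ^ 5,
   (c * b⁻¹ * c * b) ^ 2,
   a⁻¹ * b * a * c * a⁻¹ * b * a * (b * a * c)⁻¹ * a * c⁻¹,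
   a * b * a⁻¹ * c * a * b * (c * a)⁻¹ * a * b⁻¹ * (c * a)⁻¹}

/-!
Let `H` be the subgroup. The group acts transitively on 100 points by explicit permutations, and
the generators of `H` fix the point `0`, so `H` is contained in the stabilizer of `0`. For equality,
a Todd–Coxeter enumeration attaches to each point `x` a coset `v x` of `H`, with `v 0 = H`, and
derives from the relators that `v` is equivariant: an element fixing `0` then fixes the coset `H`,
hence lies in `H`. So `H` is the stabilizer of `0` and has index 100. Only the soundness of the
enumeration matters: every entry it writes into the coset table is a true statement about the action
on the cosets, whichever definitions and scans are prescribed.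
-/

theorem map_smul_of_closure_range_eq_top {ι G X Y : Type*} [Group G] [MulAction G X]
    [MulAction G Y] {s : ι → G} (hs : Subgroup.closure (Set.range s) = ⊤) {f : X → Y}
    (hf : ∀ i x, f (s i • x) = s i • f x) (g : G) (x : X) : f (g • x) = g • f x := by
  induction hs ▸ Subgroup.mem_top g using Subgroup.closure_induction generalizing x with
  | mem _ hg => obtain ⟨i, rfl⟩ := hg; exact hf i x
  | one => simp only [one_smul]
  | mul g h _ _ ihg ihh => rw [mul_smul, mul_smul, ihg, ihh]
  | inv g _ ih => rw [eq_inv_smul_iff, ← ih, smul_inv_smul]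

/-- Coset tables for Todd–Coxeter enumeration, over generators indexed by `ι`: an entry
`(x, i, y)` asserts that the generator `i` carries the point named `y` to the point named `x`.
Several names may stand for the same point. -/
abbrev CosetTable (ι : Type*) := List (ℕ × ι × ℕ)

namespace CosetTable

section Enumeration

variable {ι : Type*} [DecidableEq ι]

/-- The name `y`, if the table has one, such that the letter `l` carries `y` to `x`. -/
def step (t : CosetTable ι) (x : ℕ) : ι × Bool → Option ℕ
  | (i, true) => (t.find? fun e => e.1.beq x && e.2.1 == i).map fun e => e.2.2
  | (i, false) => (t.find? fun e => e.2.2.beq x && e.2.1 == i).map fun e => e.1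

/-- Steps from `x` along the letters of a word for as long as the table allows; returns the name
reached and the unread letters. -/
def trace (t : CosetTable ι) (x : ℕ) : List (ι × Bool) → ℕ × List (ι × Bool)
  | [] => (x, [])
  | l :: w =>
    match t.step x l with
    | some y => t.trace y w
    | none => (x, l :: w)

/-- Merges two names of the same point into the smaller one. -/
def identify (t : CosetTable ι) (x y : ℕ) : CosetTable ι :=
  let rename (z : ℕ) := if z = max x y then min x y else z
  t.map fun e => (rename e.1, e.2.1, rename e.2.2)

/-- Records what the table yields from the fact that the word `w` fixes the point `x`: tracing
`w` from both ends leads to names `y` and `z` with only an unread middle part of `w` between them.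
If this is empty then the two names are identified, and if it is one letter then a new entry
results. -/
def scan (t : CosetTable ι) (x : ℕ) (w : List (ι × Bool)) : CosetTable ι :=
  let (y, w') := t.trace x w
  let (z, u) := t.trace x (FreeGroup.invRev w')
  match u with
  | [] => t.identify y z
  | [(i, true)] => (z, i, y) :: t
  | [(i, false)] => (y, i, z) :: t
  | _ => t

/-- The table in which the name `n + 1` is defined as the image of the name `p` under the generator
`i`, where `(p, i)` is the `n`-th entry of the list. -/
def define (d : List (ℕ × ι)) : CosetTable ι :=
  d.zipIdx.map fun e => (e.2 + 1, e.1.2, e.1.1)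

/-- Coset enumeration with prescribed definitions and a prescribed sequence of scans. -/
def enumerate (d : List (ℕ × ι)) (scans : List (ℕ × FreeGroup ι)) : CosetTable ι :=
  scans.foldl (fun t e => t.scan e.1 e.2.toWord) (define d)

end Enumeration

section Soundness

variable {ι G Y : Type*} [Group G] [MulAction G Y] {s : ι → G} {v : ℕ → Y}
  {t : CosetTable ι}

/-- The entries of the table hold when the name `x` denotes the point `v x` and the generator `i`
acts as `s i`. -/
def Holds (s : ι → G) (v : ℕ → Y) (t : CosetTable ι) : Prop :=
  ∀ e ∈ t, v e.1 = s e.2.1 • v e.2.2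

/-- The interpretation of the names defined by the list `d` when `0` stands for `y₀`. A forward
reference in `d` yields the junk value `y₀`. -/
def denote (s : ι → G) (y₀ : Y) (d : List (ℕ × ι)) : ℕ → Y
  | 0 => y₀
  | n + 1 =>
    match d[n]? with
    | some (p, i) => if p ≤ n then s i • denote s y₀ d p else y₀
    | none => y₀

theorem holds_define (s : ι → G) (y₀ : Y) {d : List (ℕ × ι)}
    (hd : ∀ e ∈ d.zipIdx, e.1.1 ≤ e.2) : (define d).Holds s (denote s y₀ d) := by
  refine List.forall_mem_map.mpr fun ⟨⟨p, i⟩, n⟩ he => ?_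
  have hdn : d[n]? = some (p, i) := List.mem_zipIdx_iff_getElem?.mp he
  have hpn : p ≤ n := hd _ he
  simp [denote, hdn, hpn]

theorem Holds.identify {x y : ℕ} (ht : t.Holds s v) (hxy : v x = v y) :
    (t.identify x y).Holds s v := by
  have rename_eq (z : ℕ) : v (if z = max x y then min x y else z) = v z := by
    split_ifs with hz
    · rcases le_total x y with h | h <;> simp [hz, h, hxy]
    · rfl
  simpa only [Holds, CosetTable.identify, List.forall_mem_map, rename_eq] using ht

variable [DecidableEq ι]

theorem Holds.step {x y : ℕ} {l : ι × Bool} (ht : t.Holds s v) (h : t.step x l = some y) :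
    v x = FreeGroup.lift s (.mk [l]) • v y := by
  obtain ⟨i, _ | _⟩ := l <;>
    obtain ⟨e, he, rfl⟩ := Option.map_eq_some_iff.mp h <;>
    have hv := ht e (List.mem_of_find?_eq_some he) <;>
    have hxi := List.find?_some he <;>
    simp only [Bool.and_eq_true, Nat.beq_eq, beq_iff_eq] at hxi <;>
    rw [hxi.1, hxi.2] at hv <;>
    simp [hv]

theorem Holds.trace (ht : t.Holds s v) (x : ℕ) (w : List (ι × Bool)) (p : Y) :
    v x = FreeGroup.lift s (.mk w) • p ↔
      v (t.trace x w).1 = FreeGroup.lift s (.mk (t.trace x w).2) • p := by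
  induction w generalizing x with
  | nil => rfl
  | cons l w ih =>
    rw [CosetTable.trace]
    split
    · next y hy =>
      rw [← ih, ← List.singleton_append, ← FreeGroup.mul_mk, map_mul, mul_smul, ht.step hy,
        smul_left_cancel_iff]
    · rfl

theorem Holds.scan {x : ℕ} {w : List (ι × Bool)} (ht : t.Holds s v)
    (hw : FreeGroup.lift s (.mk w) • v x = v x) : (t.scan x w).Holds s v := by
  obtain ⟨y, w', hy⟩ : ∃ y w', t.trace x w = (y, w') := ⟨_, _, rfl⟩
  obtain ⟨z, u, hz⟩ : ∃ z u, t.trace x (FreeGroup.invRev w') = (z, u) := ⟨_, _, rfl⟩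
  have hxy : v y = FreeGroup.lift s (.mk w') • v x := by
    simpa only [hy] using (ht.trace x w (v x)).mp hw.symm
  have hzy : v z = FreeGroup.lift s (.mk u) • v y := by
    simpa only [hz] using (ht.trace x (FreeGroup.invRev w') (v y)).mp <| by
      rw [hxy, ← FreeGroup.inv_mk, map_inv, inv_smul_smul]
  simp only [CosetTable.scan, hy, hz]
  split
  · exact ht.identify (by simpa using hzy.symm)
  · exact List.forall_mem_cons.mpr ⟨by simpa using hzy, ht⟩
  · exact List.forall_mem_cons.mpr ⟨by simp [hzy], ht⟩
  · exact ht

theorem holds_enumerate (s : ι → G) (y₀ : Y) {d : List (ℕ × ι)}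
    (hd : ∀ e ∈ d.zipIdx, e.1.1 ≤ e.2) {scans : List (ℕ × FreeGroup ι)}
    (hscans : ∀ e ∈ scans, FreeGroup.lift s e.2 • denote s y₀ d e.1 = denote s y₀ d e.1) :
    (enumerate d scans).Holds s (denote s y₀ d) :=
  List.foldlRecOn scans _ (holds_define s y₀ hd) fun _ ht e he =>
    ht.scan <| by rw [FreeGroup.mk_toWord, hscans e he]

theorem Holds.map_smul {X : Type*} [MulAction G X] {name : X → ℕ} (ht : t.Holds s v)
    (hs : Subgroup.closure (Set.range s) = ⊤)
    (hname : ∀ i x, t.step (name x) (i, false) = some (name (s i • x))) (g : G) (x : X) :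
    v (name (g • x)) = g • v (name x) := by
  refine map_smul_of_closure_range_eq_top hs (f := fun x => v (name x)) (fun i x => ?_) g x
  simpa [inv_smul_eq_iff] using (ht.step (hname i x)).symm

end Soundness

end CosetTable

namespace Janko

/-- The Janko group J₂, given by its presentation. -/
abbrev J₂ := PresentedGroup jankoRels

/-- The relators, listed so that a scan can refer to them by position. -/
def relators : List (FreeGroup (Fin 3)) :=
  let a : FreeGroup (Fin 3) := FreeGroup.of 0
  let b : FreeGroup (Fin 3) := FreeGroup.of 1
  let c : FreeGroup (Fin 3) := FreeGroup.of 2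
  [a ^ 3, b ^ 3, c ^ 3, a * b * a * (b * a * b)⁻¹, (c * a) ^ 5, (c * b) ^ 5,
   (c * b⁻¹ * c * b) ^ 2,
   a⁻¹ * b * a * c * a⁻¹ * b * a * (b * a * c)⁻¹ * a * c⁻¹,
   a * b * a⁻¹ * c * a * b * (c * a)⁻¹ * a * b⁻¹ * (c * a)⁻¹]

/-- Words for the generators of the subgroup of index 100. -/
def subgroupGenerators : List (FreeGroup (Fin 3)) :=
  let a : FreeGroup (Fin 3) := FreeGroup.of 0
  let b : FreeGroup (Fin 3) := FreeGroup.of 1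
  let c : FreeGroup (Fin 3) := FreeGroup.of 2
  [a, b, (c * a⁻¹ * c)⁻¹ * b * (c * a⁻¹ * c)]

/-- The names used in the enumeration of the cosets, as in `CosetTable.define`, with `0` standing
for the subgroup. Each coset has exactly one name below 100. The other names are redundant, but lead
the enumeration to deductions that it does not find without them. -/
def definitions : List (ℕ × Fin 3) :=
  [(0, 2), (1, 2), (1, 0), (3, 1), (1, 1), (3, 2), (4, 1), (5, 0), (2, 1), (2, 0), (4, 2), (3, 0),
   (5, 1), (6, 0), (4, 0), (7, 0), (5, 2), (8, 2), (7, 2), (6, 2), (8, 0), (9, 0), (11, 1), (9, 2),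
   (12, 2), (11, 2), (10, 0), (10, 2), (12, 1), (14, 0), (11, 0), (13, 2), (15, 1), (16, 1),
   (18, 0), (15, 2), (16, 2), (15, 0), (17, 1), (19, 0), (20, 0), (18, 2), (22, 1), (23, 2),
   (21, 1), (19, 2), (23, 0), (21, 2), (25, 0), (24, 2), (26, 0), (24, 1), (31, 0), (31, 2),
   (26, 1), (29, 1), (34, 1), (35, 2), (34, 2), (35, 1), (38, 1), (37, 2), (36, 2), (40, 1),
   (42, 0), (45, 2), (44, 2), (49, 0), (43, 2), (44, 1), (44, 0), (50, 1), (51, 0), (47, 0),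
   (48, 1), (47, 2), (46, 0), (48, 2), (53, 1), (54, 2), (58, 0), (55, 0), (59, 1), (58, 1),
   (61, 2), (57, 2), (59, 2), (63, 0), (62, 0), (69, 2), (66, 2), (67, 0), (73, 2), (74, 2),
   (79, 2), (78, 1), (83, 1), (86, 2), (86, 0), (25, 2), (10, 1), (101, 0), (102, 0), (103, 2),
   (104, 2), (105, 0), (106, 0), (32, 0), (108, 0), (107, 1), (56, 2), (111, 2), (112, 1),
   (109, 1), (114, 0), (115, 0), (116, 1), (117, 1), (118, 0), (110, 2), (120, 1), (121, 0),
   (104, 1), (119, 0), (124, 2), (125, 2), (126, 0), (119, 1), (122, 1), (120, 0), (39, 1),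
   (100, 1), (129, 0), (130, 0), (133, 0), (9, 1), (123, 1), (127, 0), (134, 1), (139, 1),
   (113, 1), (128, 1), (140, 0)]

/-- The scans of the enumeration: `(n, k)` scans the `k`-th entry of `wordsFixing n` from `n`. The
list was found by computer search and then thinned out. -/
def scanIndices : List (ℕ × ℕ) :=
  [(138, 0), (19, 2), (12, 2), (24, 2), (48, 2), (90, 2), (83, 1), (116, 1), (4, 1), (134, 0),
   (137, 1), (12, 1), (1, 1), (54, 2), (0, 2), (118, 0), (115, 0), (33, 3), (31, 0), (4, 0),
   (45, 2), (9, 1), (43, 3), (129, 0), (113, 1), (129, 3), (29, 3), (124, 2), (101, 0), (15, 2),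
   (32, 0), (119, 1), (3, 2), (29, 0), (1, 0), (26, 2), (56, 2), (37, 2), (23, 2), (73, 0), (8, 3),
   (105, 2), (0, 11), (30, 0), (86, 2), (107, 0), (17, 1), (68, 0), (34, 2), (27, 0), (134, 1),
   (0, 10), (114, 3), (136, 6), (136, 5), (8, 1), (57, 1), (100, 6), (39, 6), (47, 0), (42, 2),
   (141, 5), (16, 3), (0, 6), (0, 9), (72, 1), (1, 7), (131, 2), (3, 3), (104, 7), (33, 8),
   (50, 6), (108, 3), (103, 7), (12, 3), (45, 3), (7, 0), (45, 0), (110, 3), (120, 8), (143, 6),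
   (121, 3), (121, 0), (115, 8), (115, 7), (127, 1), (138, 3), (107, 3), (124, 8), (126, 8),
   (9, 6), (127, 0), (32, 3), (50, 6), (103, 2), (104, 6), (9, 3), (2, 3), (22, 3), (52, 8),
   (2, 7), (137, 3), (1, 8), (28, 0), (28, 3), (7, 3), (13, 0), (13, 6), (61, 3), (120, 0),
   (19, 7), (64, 1), (64, 2), (2, 6), (112, 5), (36, 8), (131, 5), (40, 0), (7, 8), (4, 7), (3, 7),
   (3, 4), (131, 4), (4, 6), (3, 6), (49, 2), (41, 0), (15, 7), (11, 6), (11, 1), (18, 8), (47, 3),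
   (10, 6), (48, 7), (48, 1), (1, 4), (26, 7), (63, 7), (42, 8), (49, 4), (48, 8), (23, 5),
   (60, 0), (51, 1), (21, 7), (5, 4), (75, 3), (17, 0), (7, 6), (38, 6), (15, 6), (58, 7), (78, 0),
   (96, 1), (38, 8), (26, 5), (11, 3), (68, 3), (18, 3), (77, 0), (14, 1), (79, 8), (42, 3),
   (36, 5), (73, 3), (47, 1), (35, 3), (51, 2), (6, 7), (23, 3), (76, 6), (73, 2), (55, 0),
   (22, 4), (30, 8), (16, 4), (28, 7), (14, 3), (69, 1), (69, 8), (55, 8), (65, 8), (70, 7),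
   (94, 5), (75, 6), (92, 3), (93, 6), (70, 3), (92, 0), (43, 6), (91, 1), (80, 1), (4, 8),
   (94, 2), (17, 4), (82, 7), (66, 0), (57, 4), (30, 3), (47, 2), (41, 8), (45, 7), (59, 0),
   (89, 3), (83, 3), (50, 8), (74, 7), (74, 4), (18, 5), (92, 6), (84, 3), (98, 1), (35, 7),
   (35, 2), (98, 4), (53, 4), (34, 6), (92, 1), (62, 6), (62, 4), (82, 8), (90, 0), (98, 5),
   (84, 0), (43, 8), (97, 8), (57, 5), (31, 7), (62, 7), (58, 6), (63, 3), (15, 4), (88, 1),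
   (99, 8)]

/-- Words that fix the coset named `n`. -/
def wordsFixing (n : ℕ) : List (FreeGroup (Fin 3)) :=
  if n = 0 then relators ++ subgroupGenerators else relators

/-- The scans listed in `scanIndices`, with their words. -/
def scans : List (ℕ × FreeGroup (Fin 3)) :=
  scanIndices.filterMap fun e => ((wordsFixing e.1)[e.2]?).map fun w => (e.1, w)

/-- The images of the points `0, …, 99` under the three generators. The point `x` plays the role
of the coset that `definitions` names `x`. -/
def images : Fin 3 → List ℕ := ![
  [0, 3, 10, 12, 15, 8, 14, 16, 21, 22, 27, 31, 1, 20, 30, 38, 24, 18, 35, 40, 41, 5, 43, 47, 7,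
   49, 51, 2, 52, 33, 6, 53, 32, 34, 29, 17, 60, 37, 4, 42, 50, 13, 65, 9, 71, 61, 77, 74, 48, 68,
   19, 73, 56, 11, 54, 82, 28, 45, 81, 58, 79, 57, 89, 88, 64, 39, 44, 92, 25, 55, 70, 66, 46, 26,
   23, 87, 86, 72, 75, 36, 63, 59, 69, 83, 97, 67, 99, 78, 80, 90, 62, 94, 85, 84, 98, 95, 96, 93,
   91, 76],
  [0, 5, 9, 4, 7, 13, 11, 3, 15, 27, 22, 23, 29, 1, 26, 33, 34, 39, 31, 19, 38, 45, 43, 6, 52, 25,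
   55, 2, 21, 56, 17, 51, 50, 8, 57, 60, 47, 58, 61, 30, 64, 24, 53, 10, 70, 28, 40, 73, 75, 48,
   72, 18, 41, 79, 54, 14, 12, 16, 84, 83, 82, 20, 89, 76, 46, 74, 66, 67, 78, 65, 85, 92, 32, 36,
   69, 49, 80, 77, 96, 42, 63, 81, 35, 97, 37, 44, 99, 87, 86, 98, 91, 94, 95, 93, 90, 71, 68, 59,
   62, 88],
  [1, 2, 0, 6, 11, 17, 20, 19, 18, 24, 28, 26, 25, 32, 14, 36, 37, 29, 42, 46, 3, 48, 22, 44, 50,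
   41, 4, 52, 49, 5, 27, 54, 56, 33, 59, 58, 63, 62, 38, 39, 55, 12, 8, 69, 67, 66, 7, 76, 78, 10,
   9, 79, 30, 73, 80, 70, 13, 86, 83, 87, 88, 85, 16, 15, 61, 81, 91, 23, 68, 90, 40, 71, 72, 93,
   94, 65, 92, 82, 21, 95, 31, 75, 89, 35, 84, 64, 98, 34, 97, 77, 43, 45, 47, 53, 96, 51, 74, 60,
   57, 99]]

/-- A map whose cube is the identity, as a permutation. -/
def permOfCube {X : Type*} (f : X → X) (h : ∀ x, f (f (f x)) = x) : Equiv.Perm X where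
  toFun := f
  invFun x := f (f x)
  left_inv := h
  right_inv := h

/-- The action of the generators of J₂ on 100 points. -/
def genPerm (i : Fin 3) : Equiv.Perm (Fin 100) :=
  permOfCube (fun x => Fin.ofNat 100 ((images i).getD x 0)) (by decide +revert +kernel)

theorem mem_relators_iff {r : FreeGroup (Fin 3)} : r ∈ relators ↔ r ∈ jankoRels := by
  simp only [relators, jankoRels, List.mem_cons, List.not_mem_nil, or_false,
    Set.mem_insert_iff, Set.mem_singleton_iff]

theorem lift_genPerm_eq_one : ∀ r ∈ jankoRels, FreeGroup.lift genPerm r = 1 := by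
  have h : ∀ r ∈ relators, FreeGroup.lift genPerm r = 1 := by decide +kernel
  exact fun r hr => h r (mem_relators_iff.mpr hr)

instance : MulAction J₂ (Fin 100) :=
  .compHom (Fin 100) (PresentedGroup.toGroup lift_genPerm_eq_one)

theorem mk_smul (w : FreeGroup (Fin 3)) (x : Fin 100) :
    PresentedGroup.mk jankoRels w • x = FreeGroup.lift genPerm w x :=
  rfl

theorem of_smul (i : Fin 3) (x : Fin 100) :
    PresentedGroup.of (rels := jankoRels) i • x = genPerm i x := by
  rw [PresentedGroup.of, mk_smul, FreeGroup.lift_apply_of]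

instance : MulAction.IsPretransitive J₂ (Fin 100) := by
  refine (MulAction.isPretransitive_iff_base 0).mpr fun x => ?_
  have hdescent : ∀ x : Fin 100, x = 0 ∨ ∃ i, (genPerm i).symm x < x := by decide +kernel
  induction x using WellFoundedLT.induction with
  | ind x ih =>
    rcases hdescent x with rfl | ⟨i, hi⟩
    · exact ⟨1, one_smul _ _⟩
    · obtain ⟨g, hg⟩ := ih _ hi
      exact ⟨.of i * g, by rw [mul_smul, hg, of_smul, Equiv.apply_symm_apply]⟩

theorem step_enumerate : ∀ (i : Fin 3) (x : Fin 100),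
    (CosetTable.enumerate definitions scans).step x (i, false) = some (genPerm i x : ℕ) := by
  decide +kernel

/-- The coset of `H` that a name stands for, when `0` is the name of `H` itself. -/
def coset (H : Subgroup J₂) : ℕ → J₂ ⧸ H :=
  CosetTable.denote (PresentedGroup.of (rels := jankoRels)) ((1 : J₂) : _ ⧸ H) definitions

theorem coset_zero (H : Subgroup J₂) : coset H 0 = (1 : J₂) := by
  rw [coset, CosetTable.denote]

theorem lift_of_eq_mk : FreeGroup.lift PresentedGroup.of = PresentedGroup.mk jankoRels :=
  FreeGroup.ext_hom _ _ fun _ => FreeGroup.lift_apply_of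

variable {H : Subgroup J₂}

theorem mk_smul_coset (hH : ∀ w ∈ subgroupGenerators, PresentedGroup.mk jankoRels w ∈ H) {n : ℕ}
    {w : FreeGroup (Fin 3)} (hw : w ∈ wordsFixing n) :
    PresentedGroup.mk jankoRels w • coset H n = coset H n := by
  have hrel (hw : w ∈ relators) : PresentedGroup.mk jankoRels w • coset H n = coset H n := by
    rw [PresentedGroup.one_of_mem (mem_relators_iff.mp hw), one_smul]
  rw [wordsFixing] at hw
  split_ifs at hw with hn
  · rcases List.mem_append.mp hw with hw | hw
    · exact hrel hw
    · rw [hn, coset_zero, ← MulAction.mem_stabilizer_iff, MulAction.stabilizer_quotient]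
      exact hH w hw
  · exact hrel hw

theorem holds_coset (hH : ∀ w ∈ subgroupGenerators, PresentedGroup.mk jankoRels w ∈ H) :
    (CosetTable.enumerate definitions scans).Holds (PresentedGroup.of (rels := jankoRels))
      (coset H) := by
  refine CosetTable.holds_enumerate (PresentedGroup.of (rels := jankoRels)) _ (by decide +kernel)
    fun e he => ?_
  obtain ⟨⟨n, k⟩, -, hk⟩ := List.mem_filterMap.mp he
  obtain ⟨w, hw, rfl⟩ := Option.map_eq_some_iff.mp hk
  rw [lift_of_eq_mk]
  exact mk_smul_coset hH (List.mem_of_getElem? hw)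

theorem coset_smul (hH : ∀ w ∈ subgroupGenerators, PresentedGroup.mk jankoRels w ∈ H)
    (g : J₂) (x : Fin 100) : coset H ↑(g • x) = g • coset H x :=
  (holds_coset hH).map_smul (name := Fin.val) (PresentedGroup.closure_range_of jankoRels)
    (fun i x => by rw [of_smul, step_enumerate]) g x

theorem stabilizer_zero_le (hH : ∀ w ∈ subgroupGenerators, PresentedGroup.mk jankoRels w ∈ H) :
    MulAction.stabilizer J₂ (0 : Fin 100) ≤ H := by
  intro g hg
  rw [← MulAction.stabilizer_quotient H, MulAction.mem_stabilizer_iff, ← coset_zero,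
    ← Fin.val_zero 100, ← coset_smul hH, hg]

theorem closure_subgroupGenerators :
    Subgroup.closure (PresentedGroup.mk jankoRels '' {w | w ∈ subgroupGenerators}) =
      MulAction.stabilizer J₂ (0 : Fin 100) := by
  refine le_antisymm ?_ (stabilizer_zero_le fun w hw => Subgroup.subset_closure ⟨w, hw, rfl⟩)
  have hfix : ∀ w ∈ subgroupGenerators, FreeGroup.lift genPerm w 0 = 0 := by decide +kernel
  rw [Subgroup.closure_le]
  rintro _ ⟨w, hw, rfl⟩
  exact hfix w hw

end Janko

theorem janko_subgroup_index_100 :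
    let a : PresentedGroup jankoRels := PresentedGroup.of 0
    let b : PresentedGroup jankoRels := PresentedGroup.of 1
    let c : PresentedGroup jankoRels := PresentedGroup.of 2
    (Subgroup.closure {a, b, (c * a⁻¹ * c)⁻¹ * b * (c * a⁻¹ * c)}).index = 100 := by
  intro a b c
  have hgen : ({a, b, (c * a⁻¹ * c)⁻¹ * b * (c * a⁻¹ * c)} : Set (PresentedGroup jankoRels)) =
      PresentedGroup.mk jankoRels '' {w | w ∈ Janko.subgroupGenerators} := by
    ext g
    simp [Janko.subgroupGenerators, PresentedGroup.of, a, b, c, eq_comm]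
  rw [hgen, Janko.closure_subgroupGenerators, MulAction.index_stabilizer_of_transitive,
    Nat.card_fin]
end

section
/- The Fibonacci group F(2,9), given by the two-generator presentation with generators a, b and relators b·a·b·a·b²·a·b²·a⁻¹·b·a⁻²·b·a⁻² and a·b²·a·b²·a·b·a·b²·a·b·a²·b⁻¹·a·b⁻¹, is an infinite group. -/
/-!
Write `G = F(2, n)` in its cyclic presentation `xᵢ xᵢ₊₁ = xᵢ₊₂` with `n` odd. The element
`c = x₁ x₀ x₂⁻¹` is an involution with `xᵢ₊₁ xᵢ = c xᵢ₊₂` for all `i`. Let `N` be the smallest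
normal subgroup modulo which `c` is central; the quotient `G ⧸ N` is small (for `n = 9` its order
divides 152).

Suppose `G` is finite and let it act on the functions `G → k`. In the series `F₀ = 0`,
`Fⱼ₊₁ / Fⱼ = (Y / Fⱼ)^N`, let `Uⱼ` be the dimension of the invariants of `Y / Fⱼ`. Each
representation `V` of `G` with `c = -1` and a spanning 1-cocycle that vanishes at `c` gives
`dim V * Uⱼ` independent 1-cocycles with values in `Y / Fⱼ`, so the Fox matrix of the presentation
loses that much rank. As its kernel on the functions themselves is as small as possible, the
shifted ranks force `Uⱼ₊₁` to outweigh `dim V * Uⱼ`, up to the contribution of `dim Fⱼ`, which is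
at most `|G ⧸ N| * ∑ Uᵢ`. If `(dim V)²` is at least `2 |G ⧸ N| + 4`, the `Uⱼ` therefore never vanish
and `dim Fⱼ` is unbounded, which is absurd.

For `n = 9` such a `V` of dimension 18 exists over the field with five elements: the quaternion
representation tensored with the field with `5 ^ 9` elements, on which the generators act as the
Galois conjugates of a primitive nineteenth root of unity.
-/

open Representation Module

section Cocycle

variable {k G V : Type*} [CommRing k] [Group G] [AddCommGroup V] [Module k V]

/-- The inhomogeneous one-cocycles (crossed homomorphisms) of a representation. Unlike
`groupCohomology.IsCocycle₁` this takes the action as a `Representation`. -/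
def IsOneCocycle (ρ : Representation k G V) (f : G → V) : Prop :=
  ∀ g h, f (g * h) = f g + ρ g (f h)

namespace IsOneCocycle

variable {ρ : Representation k G V} {f : G → V}

lemma map_one (hf : IsOneCocycle ρ f) : f 1 = 0 := by
  simpa using hf 1 1

lemma map_inv (hf : IsOneCocycle ρ f) (g : G) : f g⁻¹ = -ρ g⁻¹ (f g) :=
  eq_neg_of_add_eq_zero_left <| by rw [← hf, inv_mul_cancel, hf.map_one]

/-- The zero locus of a cocycle. -/
def zeroSubgroup (hf : IsOneCocycle ρ f) : Subgroup G where
  carrier := {g | f g = 0}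
  one_mem' := hf.map_one
  mul_mem' {g h} hg hh := by
    rw [Set.mem_ofPred_eq] at *
    rw [hf, hg, hh, map_zero, add_zero]
  inv_mem' {g} hg := by
    rw [Set.mem_ofPred_eq] at *
    rw [hf.map_inv, hg, map_zero, neg_zero]

lemma map_eq_zero_of_mem_closure (hf : IsOneCocycle ρ f) {s : Set G} (hs : ∀ g ∈ s, f g = 0)
    {g : G} (hg : g ∈ Subgroup.closure s) : f g = 0 :=
  (Subgroup.closure_le hf.zeroSubgroup).2 hs hg

lemma apply_mem_span (hf : IsOneCocycle ρ f) (g : G) {v : V}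
    (hv : v ∈ Submodule.span k (Set.range f)) : ρ g v ∈ Submodule.span k (Set.range f) := by
  suffices Submodule.span k (Set.range f) ≤ (Submodule.span k (Set.range f)).comap (ρ g) from
    this hv
  rw [Submodule.span_le]
  rintro _ ⟨h, rfl⟩
  rw [SetLike.mem_coe, Submodule.mem_comap, ← add_sub_cancel_left (f g) (ρ g (f h)), ← hf]
  exact sub_mem (Submodule.subset_span ⟨_, rfl⟩) (Submodule.subset_span ⟨_, rfl⟩)

end IsOneCocycle

lemma isOneCocycle_apply_sub_self (ρ : Representation k G V) (v : V) :
    IsOneCocycle ρ fun g ↦ ρ g v - v := by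
  intro g h
  simp only [map_mul, Module.End.mul_apply, map_sub]
  abel

end Cocycle

section CommutatorClosure

open scoped commutatorElement

variable {G : Type*} [Group G]

/-- The smallest normal subgroup of `G` modulo which `c` is central. -/
def commutatorClosure (c : G) : Subgroup G :=
  Subgroup.closure (Set.range fun g ↦ ⁅c, g⁆)

variable (c : G)

lemma commutator_mem_commutatorClosure (g : G) : ⁅c, g⁆ ∈ commutatorClosure c :=
  Subgroup.subset_closure ⟨g, rfl⟩

instance normal_commutatorClosure : (commutatorClosure c).Normal where
  conj_mem a ha h := by
    induction ha using Subgroup.closure_induction with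
    | mem _ hx =>
      obtain ⟨g, rfl⟩ := hx
      have : h * ⁅c, g⁆ * h⁻¹ = ⁅c, h⁆⁻¹ * ⁅c, h * g⁆ := by
        simp only [commutatorElement_def]
        group
      rw [this]
      exact mul_mem (inv_mem (commutator_mem_commutatorClosure c h))
        (commutator_mem_commutatorClosure c _)
    | one => simp
    | mul x y _ _ hx hy => simpa only [conj_mul] using mul_mem hx hy
    | inv x _ hx => simpa only [conj_inv] using inv_mem hx

variable {c}

lemma commutatorClosure_le_ker {Γ : Type*} [Group Γ] {φ : G →* Γ}
    (hφ : ∀ g, Commute (φ c) (φ g)) : commutatorClosure c ≤ φ.ker := by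
  rw [commutatorClosure, Subgroup.closure_le]
  rintro _ ⟨g, rfl⟩
  rw [SetLike.mem_coe, MonoidHom.mem_ker, map_commutatorElement,
    commutatorElement_eq_one_iff_commute]
  exact hφ g

lemma mk_commutatorClosure_mem_center (c : G) :
    (c : G ⧸ commutatorClosure c) ∈ Subgroup.center (G ⧸ commutatorClosure c) := by
  rw [Subgroup.mem_center_iff]
  rintro ⟨g⟩
  symm
  change Commute (QuotientGroup.mk' (commutatorClosure c) c) (QuotientGroup.mk' _ g)
  rw [← commutatorElement_eq_one_iff_commute, ← map_commutatorElement, ← MonoidHom.mem_ker,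
    QuotientGroup.ker_mk']
  exact commutator_mem_commutatorClosure c g

lemma mk_commutatorClosure_mul_comm (q : G ⧸ commutatorClosure c) :
    (c : G ⧸ commutatorClosure c) * q = q * c :=
  (Subgroup.mem_center_iff.1 (mk_commutatorClosure_mem_center c) q).symm

lemma commutatorClosure_le_normalClosure (c : G) :
    commutatorClosure c ≤ Subgroup.normalClosure {c} := by
  have hc : c ∈ Subgroup.normalClosure {c} := Subgroup.subset_normalClosure rfl
  rw [← QuotientGroup.ker_mk' (Subgroup.normalClosure {c})]
  refine commutatorClosure_le_ker fun g ↦ ?_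
  rw [MonoidHom.mem_ker.1 ((QuotientGroup.ker_mk' (Subgroup.normalClosure {c})).ge hc)]
  exact Commute.one_left _

lemma relIndex_commutatorClosure (c : G) :
    (commutatorClosure c).relIndex (Subgroup.normalClosure {c}) =
      orderOf (c : G ⧸ commutatorClosure c) := by
  have hnormal : (Subgroup.zpowers (c : G ⧸ commutatorClosure c)).Normal :=
    ⟨fun z hz q ↦ by
      have hcenter := Subgroup.zpowers_le.2 (mk_commutatorClosure_mem_center c)
      rwa [Subgroup.mem_center_iff.1 (hcenter hz) q, mul_inv_cancel_right]⟩
  have hmap : (Subgroup.normalClosure {c}).map (QuotientGroup.mk' (commutatorClosure c)) =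
      Subgroup.zpowers (c : G ⧸ commutatorClosure c) := by
    rw [Subgroup.map_normalClosure _ _ (QuotientGroup.mk'_surjective _), Set.image_singleton]
    refine le_antisymm (Subgroup.normalClosure_le_normal ?_) ?_
    · simp
    · exact Subgroup.zpowers_le.2 (Subgroup.subset_normalClosure rfl)
  rw [← Nat.card_zpowers, ← hmap, ← Subgroup.relIndex_ker, QuotientGroup.ker_mk']

end CommutatorClosure

section Invariants

variable {k G V : Type*} [CommRing k] [Group G] [AddCommGroup V] [Module k V]

/-- The vectors fixed by the subgroup `N`. -/
noncomputable abbrev subgroupInvariants (ρ : Representation k G V) (N : Subgroup G) :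
    Submodule k V :=
  invariants (ρ.comp N.subtype)

/-- The vectors that `N` fixes modulo the submodule `F`. -/
def invariantsMod (ρ : Representation k G V) (N : Subgroup G) (F : Submodule k V) :
    Submodule k V where
  carrier := {v | ∀ h ∈ N, ρ h v - v ∈ F}
  add_mem' {v w} hv hw h hh := by
    rw [map_add, add_sub_add_comm]
    exact add_mem (hv h hh) (hw h hh)
  zero_mem' h _ := by simp
  smul_mem' a v hv h hh := by
    rw [map_smul, ← smul_sub]
    exact F.smul_mem a (hv h hh)

variable {ρ : Representation k G V} {N : Subgroup G} {F : Submodule k V} {v : V}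

lemma mem_invariantsMod : v ∈ invariantsMod ρ N F ↔ ∀ h ∈ N, ρ h v - v ∈ F := Iff.rfl

lemma mem_subgroupInvariants :
    v ∈ subgroupInvariants ρ N ↔ ∀ h ∈ N, ρ h v = v :=
  Subtype.forall

lemma le_invariantsMod (hF : ∀ g, F ≤ F.comap (ρ g)) : F ≤ invariantsMod ρ N F :=
  fun _ hv h _ ↦ sub_mem (hF h hv) hv

lemma mkQ_mem_subgroupInvariants {hF : ∀ g, F ≤ F.comap (ρ g)} :
    F.mkQ v ∈ subgroupInvariants (ρ.quotient F hF) N ↔ v ∈ invariantsMod ρ N F := by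
  rw [mem_subgroupInvariants, mem_invariantsMod]
  exact forall₂_congr fun h _ ↦ Submodule.Quotient.eq F

lemma mkQ_mem_invariants {hF : ∀ g, F ≤ F.comap (ρ g)} :
    F.mkQ v ∈ (ρ.quotient F hF).invariants ↔ ∀ g, ρ g v - v ∈ F :=
  forall_congr' fun _ ↦ Submodule.Quotient.eq F

variable [N.Normal]

lemma apply_mem_subgroupInvariants (hv : v ∈ subgroupInvariants ρ N) (g : G) :
    ρ g v ∈ subgroupInvariants ρ N :=
  le_comap_invariants ρ N g hv

lemma apply_eq_of_mem_subgroupInvariants (hv : v ∈ subgroupInvariants ρ N) {g g' : G}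
    (h : (g : G ⧸ N) = g') : ρ g v = ρ g' v :=
  congrArg Subtype.val <|
    LinearMap.congr_fun (apply_eq_of_coe_eq (toInvariants ρ N) N g g' h) ⟨v, hv⟩

lemma invariantsMod_le_comap (hF : ∀ g, F ≤ F.comap (ρ g)) (g : G) :
    invariantsMod ρ N F ≤ (invariantsMod ρ N F).comap (ρ g) := by
  intro v hv h hh
  have := hF g (hv _ (Subgroup.Normal.conj_mem' inferInstance h hh g))
  rwa [Submodule.mem_comap, map_sub, ← Module.End.mul_apply, ← map_mul, ← mul_assoc,
    mul_inv_cancel_left, map_mul, Module.End.mul_apply] at this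

end Invariants

section Semisimple

variable {k G V : Type*} [Field k] [Group G] [AddCommGroup V] [Module k V]

lemma exists_equivariant_projection [Finite G] [NeZero (Nat.card G : k)]
    (ρ : Representation k G V) {P : Submodule k V} (hP : ∀ g, P ≤ P.comap (ρ g)) :
    ∃ π : V →ₗ[k] V, (∀ v, π v ∈ P) ∧ (∀ v ∈ P, π v = v) ∧ ∀ g v, π (ρ g v) = ρ g (π v) := by
  obtain ⟨Q, hPQ⟩ := exists_isCompl (⟨P, hP⟩ : Subrepresentation ρ)
  have hcompl : IsCompl P Q.toSubmodule := by
    refine ⟨disjoint_iff.2 ?_, codisjoint_iff.2 ?_⟩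
    · exact congrArg Subrepresentation.toSubmodule hPQ.inf_eq_bot
    · exact congrArg Subrepresentation.toSubmodule hPQ.sup_eq_top
  set π := P.projection Q.toSubmodule hcompl
  have hπP (v : V) : π v ∈ P := Submodule.projection_apply_mem hcompl v
  have hπ {v : V} (hv : v ∈ P) : π v = v := Submodule.projection_apply_of_mem_left hcompl hv
  refine ⟨π, hπP, fun v ↦ hπ, fun g v ↦ ?_⟩
  have hQ : ρ g (v - π v) ∈ Q.toSubmodule :=
    Q.apply_mem_toSubmodule g (Submodule.sub_projection_mem hcompl v)
  have h := (Submodule.projection_apply_eq_zero_iff hcompl).2 hQ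
  rwa [map_sub, map_sub, sub_eq_zero, hπ (hP g (hπP v))] at h

namespace IsOneCocycle

variable {ρ : Representation k G V} {f : G → V}

lemma exists_eq_sub_self [Finite G] [NeZero (Nat.card G : k)] (hf : IsOneCocycle ρ f) :
    ∃ p, ∀ g, f g = ρ g p - p := by
  have := Fintype.ofFinite G
  have hsum (g : G) : ∑ h, f h = (Nat.card G : k) • f g + ρ g (∑ h, f h) := by
    rw [map_sum, Nat.cast_smul_eq_nsmul, Nat.card_eq_fintype_card, ← Finset.card_univ,
      ← Finset.sum_const, ← Finset.sum_add_distrib, ← Equiv.sum_comp (Equiv.mulLeft g)]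
    exact Finset.sum_congr rfl fun h _ ↦ hf g h
  refine ⟨-(Nat.card G : k)⁻¹ • ∑ h, f h, fun g ↦ ?_⟩
  rw [map_smul, ← smul_sub, ← inv_smul_smul₀ (NeZero.ne (Nat.card G : k)) (f g),
    eq_sub_of_add_eq (hsum g).symm, neg_smul, ← smul_neg, neg_sub]

lemma exists_eq_sub_self_of_quotient {N : Subgroup G} [N.Normal] [NeZero (Nat.card (G ⧸ N) : k)]
    [IsTrivial (ρ.comp N.subtype)] (hf : IsOneCocycle ρ f) (hN : ∀ h ∈ N, f h = 0) :
    ∃ p, ∀ g, f g = ρ g p - p := by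
  have : Finite (G ⧸ N) := Nat.finite_of_card_ne_zero (NeZero.of_neZero_natCast k).out
  have hlift (a b : G) (h : QuotientGroup.leftRel N a b) : f a = f b := by
    rw [← mul_inv_cancel_left a b, hf, hN _ (QuotientGroup.leftRel_apply.1 h), map_zero, add_zero]
  have hf' : IsOneCocycle (ofQuotient ρ N) (Quotient.lift f hlift) := by
    rintro ⟨g⟩ ⟨h⟩
    exact hf g h
  obtain ⟨p, hp⟩ := hf'.exists_eq_sub_self
  exact ⟨p, fun g ↦ hp g⟩

lemma exists_eq_sub_self_of_normalClosure {c : G} [NeZero (2 : k)]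
    [NeZero (Nat.card (G ⧸ Subgroup.normalClosure {c}) : k)]
    [IsTrivial (ρ.comp (Subgroup.normalClosure {c}).subtype)] (hc : c * c = 1)
    (hf : IsOneCocycle ρ f) : ∃ p, ∀ g, f g = ρ g p - p := by
  have hρc (v : V) : ρ c v = v :=
    isTrivial_apply (ρ.comp (Subgroup.normalClosure {c}).subtype)
      ⟨c, Subgroup.subset_normalClosure rfl⟩ v
  have hfc : f c = 0 := by
    have h := hf c c
    rw [hc, hf.map_one, hρc, ← two_smul k] at h
    exact (smul_eq_zero_iff_right two_ne_zero).1 h.symm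
  refine hf.exists_eq_sub_self_of_quotient (N := Subgroup.normalClosure {c}) fun h hh ↦
    hf.map_eq_zero_of_mem_closure (fun x hx ↦ ?_) hh
  obtain ⟨_, rfl, hconj⟩ := Group.mem_conjugatesOfSet_iff.1 hx
  obtain ⟨g, rfl⟩ := isConj_iff.1 hconj
  rw [hf, hf, hfc, map_zero, add_zero, map_mul, Module.End.mul_apply, hρc, ← hf, mul_inv_cancel,
    hf.map_one]

end IsOneCocycle

end Semisimple

section TwoLayers

variable {k G V : Type*} [CommRing k] [Group G] [AddCommGroup V] [Module k V]

/-- The second layer of the socle series of a representation restricted to `N`. -/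
noncomputable abbrev secondInvariants (ρ : Representation k G V) (N : Subgroup G) :
    Submodule k V :=
  invariantsMod ρ N (subgroupInvariants ρ N)

variable {ρ : Representation k G V} {N : Subgroup G} {v : V}

lemma subgroupInvariants_le_secondInvariants [N.Normal] :
    subgroupInvariants ρ N ≤ secondInvariants ρ N :=
  le_invariantsMod (le_comap_invariants ρ N)

lemma apply_mem_secondInvariants [N.Normal] (hv : v ∈ secondInvariants ρ N) (g : G) :
    ρ g v ∈ secondInvariants ρ N :=
  invariantsMod_le_comap (le_comap_invariants ρ N) g hv

lemma apply_mul_of_mem_secondInvariants (hv : v ∈ secondInvariants ρ N)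
    {h h' : G} (hh : h ∈ N) (hh' : h' ∈ N) : ρ (h * h') v = ρ h v + ρ h' v - v := by
  have e := mem_subgroupInvariants.1 (hv h' hh') h hh
  rw [map_sub, ← Module.End.mul_apply, ← map_mul, sub_eq_iff_eq_add] at e
  rw [e]
  abel

lemma apply_inv_of_mem_secondInvariants (hv : v ∈ secondInvariants ρ N)
    {h : G} (hh : h ∈ N) : ρ h⁻¹ v = v + v - ρ h v := by
  have e := apply_mul_of_mem_secondInvariants hv hh (inv_mem hh)
  rw [mul_inv_cancel, map_one, Module.End.one_apply, eq_sub_iff_add_eq] at e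
  rw [e, add_sub_cancel_left]

end TwoLayers

section Symmetrization

open scoped commutatorElement

variable {k G V : Type*} [Field k] [Group G] [AddCommGroup V] [Module k V]

/-- The average of a representation and its conjugate by the involution `c`. It is multiplicative
only on the second layer of the socle series for `commutatorClosure c`. -/
def symmetrization (ρ : Representation k G V) (c g : G) : V →ₗ[k] V :=
  (2 : k)⁻¹ • (ρ g + ρ (c * g * c))

variable {ρ : Representation k G V} {c : G} {v : V}

lemma symmetrization_apply (g : G) :
    symmetrization ρ c g v = (2 : k)⁻¹ • (ρ g v + ρ (c * g * c) v) := rfl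

lemma inv_two_smul_add_self [NeZero (2 : k)] (v : V) : (2 : k)⁻¹ • (v + v) = v := by
  rw [← two_smul k, inv_smul_smul₀ two_ne_zero]

lemma mk_mul_mul_eq (hc : c * c = 1) (g : G) :
    ((c * g * c : G) : G ⧸ commutatorClosure c) = g := by
  rw [QuotientGroup.mk_mul, QuotientGroup.mk_mul, mk_commutatorClosure_mul_comm, mul_assoc,
    ← QuotientGroup.mk_mul, hc, QuotientGroup.mk_one, mul_one]

lemma mul_mul_mem_commutatorClosure (hc : c * c = 1) {h : G} (hh : h ∈ commutatorClosure c) :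
    c * h * c ∈ commutatorClosure c := by
  rw [← QuotientGroup.eq_one_iff] at hh ⊢
  rw [mk_mul_mul_eq hc, hh]

lemma apply_comm_of_mem_invariants (hv : v ∈ subgroupInvariants ρ (commutatorClosure c)) (g : G) :
    ρ c (ρ g v) = ρ g (ρ c v) := by
  simp only [← Module.End.mul_apply, ← map_mul]
  refine apply_eq_of_mem_subgroupInvariants hv ?_
  rw [QuotientGroup.mk_mul, QuotientGroup.mk_mul, mk_commutatorClosure_mul_comm]

lemma symmetrization_mem_secondInvariants (hv : v ∈ secondInvariants ρ (commutatorClosure c))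
    (g : G) : symmetrization ρ c g v ∈ secondInvariants ρ (commutatorClosure c) :=
  Submodule.smul_mem _ _
    (add_mem (apply_mem_secondInvariants hv _) (apply_mem_secondInvariants hv _))

/-- The reason is that `h ↦ ρ h v - v` is additive on `commutatorClosure c`, and conjugation by `c`
inverts each generator `⁅c, g⁆`. -/
lemma apply_add_apply_conj (hc : c * c = 1) (hv : v ∈ secondInvariants ρ (commutatorClosure c))
    {h : G} (hh : h ∈ commutatorClosure c) : ρ h v + ρ (c * h * c) v = v + v := by
  have hconj {x : G} (hx : x ∈ commutatorClosure c) := mul_mul_mem_commutatorClosure hc hx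
  have hcc (x : G) : c * (c * x) = x := by rw [← mul_assoc, hc, one_mul]
  have hcinv : c⁻¹ = c := inv_eq_of_mul_eq_one_left hc
  induction hh using Subgroup.closure_induction with
  | mem _ hx =>
    obtain ⟨g, rfl⟩ := hx
    have : c * ⁅c, g⁆ * c = ⁅c, g⁆⁻¹ := by
      simp only [commutatorElement_def, mul_inv_rev, hcinv, inv_inv, mul_assoc, hcc]
    rw [this, apply_inv_of_mem_secondInvariants hv (commutator_mem_commutatorClosure c g)]
    abel
  | one => simp [hc]
  | mul a b ha hb iha ihb =>
    have : c * (a * b) * c = c * a * c * (c * b * c) := by simp only [mul_assoc, hcc]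
    rw [this, apply_mul_of_mem_secondInvariants hv ha hb,
      apply_mul_of_mem_secondInvariants hv (hconj ha) (hconj hb)]
    linear_combination (norm := module) iha + ihb
  | inv a ha iha =>
    have : c * a⁻¹ * c = (c * a * c)⁻¹ := by simp only [mul_inv_rev, hcinv, mul_assoc]
    rw [this, apply_inv_of_mem_secondInvariants hv ha,
      apply_inv_of_mem_secondInvariants hv (hconj ha)]
    linear_combination (norm := module) -iha

variable [NeZero (2 : k)]

lemma symmetrization_of_mem_invariants (hc : c * c = 1)
    (hv : v ∈ subgroupInvariants ρ (commutatorClosure c)) (g : G) :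
    symmetrization ρ c g v = ρ g v := by
  rw [symmetrization_apply, apply_eq_of_mem_subgroupInvariants hv (mk_mul_mul_eq hc g),
    inv_two_smul_add_self]

lemma symmetrization_of_mem_commutatorClosure (hc : c * c = 1)
    (hv : v ∈ secondInvariants ρ (commutatorClosure c)) {h : G} (hh : h ∈ commutatorClosure c) :
    symmetrization ρ c h v = v := by
  rw [symmetrization_apply, apply_add_apply_conj hc hv hh, inv_two_smul_add_self]

lemma symmetrization_mul (hc : c * c = 1) (hv : v ∈ secondInvariants ρ (commutatorClosure c))
    (g g' : G) :
    symmetrization ρ c (g * g') v = symmetrization ρ c g (symmetrization ρ c g' v) := by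
  have hcc (x : G) : c * (c * x) = x := by rw [← mul_assoc, hc, one_mul]
  obtain ⟨h, hh, hg'⟩ : ∃ h ∈ commutatorClosure c, c * g' * c = h * g' :=
    ⟨c * g' * c * g'⁻¹, by
      rw [← QuotientGroup.eq_one_iff, QuotientGroup.mk_mul, mk_mul_mul_eq hc, QuotientGroup.mk_inv,
        mul_inv_cancel], by group⟩
  obtain ⟨j, hj, hg⟩ : ∃ j ∈ commutatorClosure c, c * g * c = g * j :=
    ⟨g⁻¹ * (c * g * c), QuotientGroup.eq.1 (mk_mul_mul_eq hc g).symm, by group⟩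
  have hgg' : c * (g * g') * c = g * (j * h * g') := by
    calc
      c * (g * g') * c = c * g * c * (c * g' * c) := by simp only [mul_assoc, hcc]
      _ = g * (j * h * g') := by rw [hg, hg']; simp only [mul_assoc]
  have hw := apply_mem_secondInvariants hv g'
  have e := apply_mul_of_mem_secondInvariants hw hj hh
  simp only [symmetrization_apply, hg', hg, hgg', map_mul ρ, Module.End.mul_apply, map_add,
    map_smul] at e ⊢
  rw [e, map_sub, map_add]
  match_scalars <;> field

/-- The symmetrized representation on the second layer. -/
noncomputable def symmRep (ρ : Representation k G V) (hc : c * c = 1) :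
    Representation k G (secondInvariants ρ (commutatorClosure c)) where
  toFun g := (symmetrization ρ c g).restrict fun _ hv ↦ symmetrization_mem_secondInvariants hv g
  map_one' := by
    ext v
    exact symmetrization_of_mem_commutatorClosure hc v.2 (one_mem _)
  map_mul' g g' := by
    ext v
    exact symmetrization_mul hc v.2 g g'

lemma isTrivial_symmRep (hc : c * c = 1) :
    IsTrivial ((symmRep ρ hc).comp (commutatorClosure c).subtype) where
  out h := by
    ext v
    exact symmetrization_of_mem_commutatorClosure hc v.2 h.2

lemma exists_symmetrization_projection [NeZero (Nat.card (G ⧸ commutatorClosure c) : k)]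
    (hc : c * c = 1) :
    ∃ π : secondInvariants ρ (commutatorClosure c) →ₗ[k] V,
      (∀ v, π v ∈ subgroupInvariants ρ (commutatorClosure c)) ∧
      (∀ v : secondInvariants ρ (commutatorClosure c),
        (v : V) ∈ subgroupInvariants ρ (commutatorClosure c) → π v = v) ∧
      ∀ g v, π (symmRep ρ hc g v) = ρ g (π v) := by
  have := isTrivial_symmRep (ρ := ρ) hc
  have : Finite (G ⧸ commutatorClosure c) :=
    Nat.finite_of_card_ne_zero (NeZero.of_neZero_natCast k).out
  obtain ⟨π, hπ, hπI, hπg⟩ := exists_equivariant_projection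
    (ofQuotient (symmRep ρ hc) (commutatorClosure c))
    (P := (subgroupInvariants ρ (commutatorClosure c)).comap (Submodule.subtype _)) (by
      rintro ⟨g⟩ v hv
      change symmetrization ρ c g (v : V) ∈ subgroupInvariants ρ (commutatorClosure c)
      rw [symmetrization_of_mem_invariants hc (show (v : V) ∈ _ from hv)]
      exact apply_mem_subgroupInvariants hv g)
  refine ⟨(Submodule.subtype _).comp π, hπ, fun v hv ↦ congrArg Subtype.val (hπI v hv),
    fun g v ↦ ?_⟩
  refine (congrArg Subtype.val (hπg g v)).trans ?_
  exact symmetrization_of_mem_invariants hc (hπ v) g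

end Symmetrization

/-- The relators `xᵢ xᵢ₊₁ xᵢ₊₂⁻¹` of the Fibonacci group, with indices modulo `n`. -/
def fibonacciRels (n : ℕ) : Set (FreeGroup (ZMod n)) :=
  Set.range fun i ↦ .of i * .of (i + 1) * (.of (i + 2))⁻¹

/-- The Fibonacci group `F(2, n)` in its cyclic presentation. -/
abbrev FibonacciGroup (n : ℕ) : Type := PresentedGroup (fibonacciRels n)

namespace FibonacciGroup

variable {n : ℕ}

/-- The cyclically indexed generators of the Fibonacci group. -/
def gen (i : ZMod n) : FibonacciGroup n := PresentedGroup.of i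

lemma gen_mul_gen (i : ZMod n) : gen i * gen (i + 1) = gen (i + 2) :=
  mul_inv_eq_one.1 (PresentedGroup.one_of_mem (rels := fibonacciRels n) ⟨i, rfl⟩)

lemma mem_of_gen_mem {S : Subgroup (FibonacciGroup n)} (hS : ∀ i, gen i ∈ S)
    (g : FibonacciGroup n) : g ∈ S :=
  (PresentedGroup.closure_range_of (fibonacciRels n)).ge.trans
    ((Subgroup.closure_le S).2 (Set.range_subset_iff.2 hS)) (Subgroup.mem_top g)

/-- The homomorphism sending the generators to a family satisfying the Fibonacci relations. -/
def lift {H : Type*} [Group H] {x : ZMod n → H} (hx : ∀ i, x i * x (i + 1) = x (i + 2)) :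
    FibonacciGroup n →* H :=
  PresentedGroup.toGroup (f := x) (by
    rintro _ ⟨i, rfl⟩
    simp [hx])

@[simp]
lemma lift_gen {H : Type*} [Group H] {x : ZMod n → H} (hx : ∀ i, x i * x (i + 1) = x (i + 2))
    (i : ZMod n) : lift hx (gen i) = x i :=
  PresentedGroup.toGroup.of _

section Involution

/-- The element measuring the failure of two neighbouring generators to commute. -/
def exchange (i : ZMod n) : FibonacciGroup n := gen (i + 1) * gen i * (gen (i + 2))⁻¹

lemma exchange_add_one (i : ZMod n) : exchange (i + 1) = (exchange i)⁻¹ := by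
  have h : gen (i + 1 + 2) = gen (i + 1) * (gen i * gen (i + 1)) := by
    rw [gen_mul_gen, ← gen_mul_gen (i + 1), add_assoc, one_add_one_eq_two]
  rw [exchange, exchange, h, add_assoc, one_add_one_eq_two, ← gen_mul_gen i]
  group

lemma exchange_natCast_two_mul (j : ℕ) : exchange ((2 * j : ℕ) : ZMod n) = exchange 0 := by
  induction j with
  | zero => simp
  | succ j ih =>
    rw [← ih, ← inv_inv (exchange ((2 * j : ℕ) : ZMod n)), ← exchange_add_one, ← exchange_add_one]
    push_cast
    ring_nf

lemma exchange_eq (hn : Odd n) (i : ZMod n) : exchange i = exchange 0 := by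
  obtain ⟨t, rfl⟩ := hn
  obtain ⟨j, rfl⟩ := ZMod.natCast_zmod_surjective i
  rw [← exchange_natCast_two_mul (j * (t + 1))]
  congr 1
  have h : ((2 * t + 1 : ℕ) : ZMod (2 * t + 1)) = 0 := ZMod.natCast_self _
  push_cast at h ⊢
  linear_combination -(j : ZMod (2 * t + 1)) * h

/-- The common value of all `exchange i` when `n` is odd, in which case it is an involution. -/
def involution (n : ℕ) : FibonacciGroup n := exchange 0

/-- The smallest normal subgroup modulo which the involution is central. -/
abbrev core (n : ℕ) : Subgroup (FibonacciGroup n) := commutatorClosure (involution n)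

lemma gen_add_one_mul_gen (hn : Odd n) (i : ZMod n) :
    gen (i + 1) * gen i = involution n * gen (i + 2) := by
  rw [involution, ← exchange_eq hn i, exchange, inv_mul_cancel_right]

lemma involution_mul_self (hn : Odd n) : involution n * involution n = 1 := by
  rw [mul_eq_one_iff_eq_inv, involution, ← exchange_add_one, exchange_eq hn (0 + 1)]

end Involution

section FoxMap

variable {k V : Type*} [CommRing k] [AddCommGroup V] [Module k V]

/-- The linear map given by the Fox derivatives of the relators. Its kernel consists of the
restrictions of the 1-cocycles to the generators. -/
def foxMap (ρ : Representation k (FibonacciGroup n) V) : (ZMod n → V) →ₗ[k] (ZMod n → V) where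
  toFun m i := m i + ρ (gen i) (m (i + 1)) - m (i + 2)
  map_add' m m' := by
    ext i
    simp only [Pi.add_apply, map_add]
    abel
  map_smul' a m := by
    ext i
    simp only [Pi.smul_apply, map_smul, RingHom.id_apply, smul_add, smul_sub]

variable {ρ : Representation k (FibonacciGroup n) V}

lemma foxMap_apply (m : ZMod n → V) (i : ZMod n) :
    foxMap ρ m i = m i + ρ (gen i) (m (i + 1)) - m (i + 2) := rfl

lemma foxMap_eq_zero_of_isOneCocycle {f : FibonacciGroup n → V} (hf : IsOneCocycle ρ f) :
    foxMap ρ (fun i ↦ f (gen i)) = 0 := by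
  ext i
  rw [foxMap_apply, ← hf, gen_mul_gen, sub_self, Pi.zero_apply]

lemma eq_zero_of_isOneCocycle {f : FibonacciGroup n → V} (hf : IsOneCocycle ρ f)
    (h : ∀ i, f (gen i) = 0) (g : FibonacciGroup n) : f g = 0 :=
  mem_of_gen_mem (S := hf.zeroSubgroup) h g

lemma foxMap_apply_sub_self (v : V) : foxMap ρ (fun i ↦ ρ (gen i) v - v) = 0 :=
  foxMap_eq_zero_of_isOneCocycle (isOneCocycle_apply_sub_self ρ v)

lemma foxMap_comp {W : Type*} [AddCommGroup W] [Module k W]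
    {σ : Representation k (FibonacciGroup n) W} {m : ZMod n → V} {T : V →ₗ[k] W}
    (hT : ∀ i, T (ρ (gen i) (m (i + 1))) = σ (gen i) (T (m (i + 1)))) :
    foxMap σ (T ∘ m) = T ∘ foxMap ρ m := by
  ext i
  simp only [foxMap_apply, Function.comp_apply, map_sub, map_add, hT]

lemma exists_isOneCocycle {m : ZMod n → V} (hm : foxMap ρ m = 0) :
    ∃ f, IsOneCocycle ρ f ∧ ∀ i, f (gen i) = m i := by
  let L (g : FibonacciGroup n) : V ≃ₗ[k] V :=
    LinearMap.GeneralLinearGroup.generalLinearEquiv k V (ρ.asGroupHom g)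
  let x (i : ZMod n) : V ≃ᵃ[k] V :=
    (L (gen i)).toAffineEquiv.trans (AffineEquiv.constVAdd k V (m i))
  have hxapply (i : ZMod n) (v : V) : x i v = m i + ρ (gen i) v := rfl
  have hx (i : ZMod n) : x i * x (i + 1) = x (i + 2) := by
    ext v
    rw [AffineEquiv.coe_mul, Function.comp_apply, hxapply, hxapply, hxapply, map_add, ← add_assoc,
      sub_eq_zero.1 (congrFun hm i), ← Module.End.mul_apply, ← map_mul, gen_mul_gen]
  have hlinear : AffineEquiv.linearHom.comp (lift hx) =
      (LinearMap.GeneralLinearGroup.generalLinearEquiv k V).toMonoidHom.comp ρ.asGroupHom := by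
    refine PresentedGroup.ext fun i ↦ ?_
    change (lift hx (gen i)).linear = L (gen i)
    rw [lift_gen]
    rfl
  refine ⟨fun g ↦ lift hx g 0, fun g h ↦ ?_, fun i ↦ ?_⟩
  · have hg := (lift hx g).map_vadd 0 (lift hx h 0)
    rw [show (lift hx g).linear = L g from DFunLike.congr_fun hlinear g] at hg
    rw [vadd_eq_add, add_zero] at hg
    simp only [map_mul, AffineEquiv.coe_mul, Function.comp_apply]
    exact hg.trans (add_comm _ _)
  · simp only [lift_gen, hxapply, map_zero, add_zero]

end FoxMap

end FibonacciGroup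

section NormalClosure

variable {k G V : Type*} [CommRing k] [Group G] [AddCommGroup V] [Module k V]
  {ρ : Representation k G V} {c : G} {v : V}

lemma mem_subgroupInvariants_normalClosure :
    v ∈ subgroupInvariants ρ (Subgroup.normalClosure {c}) ↔
      v ∈ subgroupInvariants ρ (commutatorClosure c) ∧ ρ c v = v := by
  refine ⟨fun h ↦ ?_, fun ⟨hN, hc⟩ ↦ mem_subgroupInvariants.2 fun x hx ↦ sub_eq_zero.1 <|
    (isOneCocycle_apply_sub_self ρ v).map_eq_zero_of_mem_closure (fun y hy ↦ ?_) hx⟩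
  · rw [mem_subgroupInvariants] at h ⊢
    exact ⟨fun x hx ↦ h x (commutatorClosure_le_normalClosure c hx),
      h c (Subgroup.subset_normalClosure rfl)⟩
  · obtain ⟨_, rfl, hconj⟩ := Group.mem_conjugatesOfSet_iff.1 hy
    obtain ⟨g, rfl⟩ := isConj_iff.1 hconj
    rw [sub_eq_zero, apply_eq_of_mem_subgroupInvariants hN (g' := _), hc]
    rw [QuotientGroup.mk_mul, QuotientGroup.mk_mul, ← mk_commutatorClosure_mul_comm,
      QuotientGroup.mk_inv, mul_inv_cancel_right]

end NormalClosure

namespace FibonacciGroup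

section Lifting

variable {k V : Type*} [Field k] [AddCommGroup V] [Module k V] {n : ℕ}
  {ρ : Representation k (FibonacciGroup n) V} {m : ZMod n → V}

lemma foxMap_apply_mem {P : Submodule k V} (hP : ∀ g, P ≤ P.comap (ρ g)) (hm : ∀ i, m i ∈ P)
    (i : ZMod n) : foxMap ρ m i ∈ P :=
  sub_mem (add_mem (hm i) (hP _ (hm (i + 1)))) (hm (i + 2))

lemma foxMap_comp_involution
    (hm : ∀ i, m i ∈ subgroupInvariants ρ (core n)) :
    foxMap ρ (ρ (involution n) ∘ m) = ρ (involution n) ∘ foxMap ρ m :=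
  foxMap_comp fun i ↦ apply_comm_of_mem_invariants (hm (i + 1)) (gen i)

lemma apply_involution_apply_involution (hn : Odd n) (v : V) :
    ρ (involution n) (ρ (involution n) v) = v := by
  rw [← Module.End.mul_apply, ← map_mul, involution_mul_self hn, map_one, Module.End.one_apply]

variable [NeZero (2 : k)]

lemma exists_eq_apply_sub_self
    [NeZero (Nat.card (FibonacciGroup n ⧸ Subgroup.normalClosure {involution n}) : k)]
    (hn : Odd n) (hR : foxMap ρ m = 0)
    (hm : ∀ i, m i ∈ subgroupInvariants ρ (Subgroup.normalClosure {involution n})) :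
    ∃ p ∈ subgroupInvariants ρ (Subgroup.normalClosure {involution n}),
      ∀ i, m i = ρ (gen i) p - p := by
  let m' (i : ZMod n) : subgroupInvariants ρ (Subgroup.normalClosure {involution n}) := ⟨m i, hm i⟩
  have hm' : foxMap (toInvariants ρ (Subgroup.normalClosure {involution n})) m' = 0 :=
    funext fun i ↦ Subtype.ext (congrFun hR i)
  obtain ⟨f, hf, hfm⟩ := exists_isOneCocycle hm'
  obtain ⟨p, hp⟩ := hf.exists_eq_sub_self_of_normalClosure (involution_mul_self hn)
  exact ⟨p, p.2, fun i ↦ congrArg Subtype.val ((hfm i).symm.trans (hp (gen i)))⟩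

lemma foxMap_symmRep (hn : Odd n)
    {m : ZMod n → secondInvariants ρ (core n)}
    (hodd : ∀ i, ρ (involution n) (m i) = -(m i : V)) (i : ZMod n) :
    (foxMap (symmRep ρ (involution_mul_self hn)) m i : V) =
      (2 : k)⁻¹ • (foxMap ρ (fun j ↦ (m j : V)) i -
        ρ (involution n) (foxMap ρ (fun j ↦ (m j : V)) i)) := by
  change (m i : V) + symmetrization ρ (involution n) (gen i) (m (i + 1) : V) - m (i + 2) = _
  simp only [symmetrization_apply, foxMap_apply, map_add, map_sub, map_mul, Module.End.mul_apply,
    hodd, map_neg]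
  match_scalars <;> field

lemma exists_foxMap_eq_sub_of_odd
    [NeZero (Nat.card (FibonacciGroup n ⧸ core n) : k)] (hn : Odd n)
    (hm : ∀ i, m i ∈ secondInvariants ρ (core n))
    (hodd : ∀ i, ρ (involution n) (m i) = -m i)
    (hR : ∀ i, foxMap ρ m i ∈ subgroupInvariants ρ (core n)) :
    ∃ m' : ZMod n → V, (∀ i, m' i ∈ subgroupInvariants ρ (core n) ∧
      ρ (involution n) (m' i) = -m' i) ∧
        ∀ i, foxMap ρ m' i = foxMap ρ m i - ρ (involution n) (foxMap ρ m i) := by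
  have hc := involution_mul_self hn
  obtain ⟨π, hπ, hπI, hπρ⟩ := exists_symmetrization_projection (ρ := ρ) hc
  let m₂ (i : ZMod n) : secondInvariants ρ (core n) := ⟨m i, hm i⟩
  have hm₂ (i : ZMod n) : (foxMap (symmRep ρ hc) m₂ i : V) =
      (2 : k)⁻¹ • (foxMap ρ m i - ρ (involution n) (foxMap ρ m i)) := foxMap_symmRep hn hodd i
  have hsymm (i : ZMod n) : symmRep ρ hc (involution n) (m₂ i) = -m₂ i := by
    refine Subtype.ext ?_
    change symmetrization ρ (involution n) (involution n) (m i) = -m i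
    rw [symmetrization_apply, hc, one_mul, hodd, inv_two_smul_add_self]
  have hπm : foxMap ρ (π ∘ m₂) = π ∘ foxMap (symmRep ρ hc) m₂ := foxMap_comp fun i ↦ hπρ _ _
  refine ⟨(2 : k) • (π ∘ m₂), fun i ↦ ⟨Submodule.smul_mem _ _ (hπ _), ?_⟩, fun i ↦ ?_⟩
  · simp only [Pi.smul_apply, Function.comp_apply, map_smul, ← hπρ, hsymm, map_neg, smul_neg]
  · rw [map_smul, hπm, Pi.smul_apply, Function.comp_apply, hπI, hm₂, smul_inv_smul₀ two_ne_zero]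
    rw [hm₂]
    exact Submodule.smul_mem _ _ (sub_mem (hR i) (apply_mem_subgroupInvariants (hR i) _))

lemma exists_foxMap_eq_and_add_mem_invariants
    [NeZero (Nat.card (FibonacciGroup n ⧸ Subgroup.normalClosure {involution n}) : k)] (hn : Odd n)
    (hm : ∀ i, m i ∈ secondInvariants ρ (core n))
    (hR : ∀ i, foxMap ρ m i ∈ subgroupInvariants ρ (core n)) :
    ∃ m' : ZMod n → V, foxMap ρ m' = foxMap ρ m ∧
      (∀ i, m' i ∈ secondInvariants ρ (core n)) ∧
      ∀ i, m' i + ρ (involution n) (m' i) ∈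
        subgroupInvariants ρ (core n) := by
  set I := subgroupInvariants ρ (core n)
  have hI (g) : I ≤ I.comap (ρ g) := le_comap_invariants ρ _ g
  set σ := ρ.quotient I hI
  have hmI (i : ZMod n) : I.mkQ (m i) ∈ subgroupInvariants σ (core n) :=
    mkQ_mem_subgroupInvariants.2 (hm i)
  have hmσ : foxMap σ (I.mkQ ∘ m) = 0 := by
    rw [foxMap_comp (ρ := ρ) (fun i ↦ rfl)]
    exact funext fun i ↦ (Submodule.Quotient.mk_eq_zero I).2 (hR i)
  obtain ⟨q, hq, hmq⟩ := exists_eq_apply_sub_self (ρ := σ) hn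
    (m := I.mkQ ∘ m + σ (involution n) ∘ I.mkQ ∘ m)
    (by rw [map_add, foxMap_comp_involution (m := I.mkQ ∘ m) hmI, hmσ]; ext; simp)
    (fun i ↦ mem_subgroupInvariants_normalClosure.2
      ⟨add_mem (hmI i) (apply_mem_subgroupInvariants (hmI i) _), by
        simp [apply_involution_apply_involution hn, add_comm]⟩)
  obtain ⟨p, rfl⟩ := I.mkQ_surjective q
  have hpI : p ∈ secondInvariants ρ (core n) :=
    mkQ_mem_subgroupInvariants.1 (mem_subgroupInvariants_normalClosure.1 hq).1
  refine ⟨m - (2 : k)⁻¹ • fun i ↦ ρ (gen i) p - p, by simp [map_sub, foxMap_apply_sub_self],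
    fun i ↦ sub_mem (hm i) (Submodule.smul_mem _ _
      (sub_mem (apply_mem_secondInvariants hpI _) hpI)), fun i ↦ ?_⟩
  have hpc : σ (involution n) (σ (gen i) (I.mkQ p) - I.mkQ p) = σ (gen i) (I.mkQ p) - I.mkQ p :=
    (mem_subgroupInvariants_normalClosure.1
      (sub_mem (apply_mem_subgroupInvariants hq (gen i)) hq)).2
  rw [← Submodule.Quotient.mk_eq_zero]
  change I.mkQ (m i) - (2 : k)⁻¹ • (σ (gen i) (I.mkQ p) - I.mkQ p) +
    σ (involution n) (I.mkQ (m i) - (2 : k)⁻¹ • (σ (gen i) (I.mkQ p) - I.mkQ p)) = 0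
  rw [map_sub, map_smul, hpc, sub_add_sub_comm, ← smul_add, inv_two_smul_add_self, ← hmq]
  exact sub_self _

lemma exists_foxMap_eq_sub
    [NeZero (Nat.card (FibonacciGroup n ⧸ core n) : k)]
    [NeZero (Nat.card (FibonacciGroup n ⧸ Subgroup.normalClosure {involution n}) : k)] (hn : Odd n)
    (hm : ∀ i, m i ∈ secondInvariants ρ (core n))
    (hR : ∀ i, foxMap ρ m i ∈ subgroupInvariants ρ (core n)) :
    ∃ m' : ZMod n → V, (∀ i, m' i ∈ subgroupInvariants ρ (core n) ∧
      ρ (involution n) (m' i) = -m' i) ∧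
        ∀ i, foxMap ρ m' i = foxMap ρ m i - ρ (involution n) (foxMap ρ m i) := by
  obtain ⟨m₁, hm₁R, hm₁, hm₁I⟩ := exists_foxMap_eq_and_add_mem_invariants hn hm hR
  set e : ZMod n → V := fun i ↦ (2 : k)⁻¹ • (m₁ i + ρ (involution n) (m₁ i)) with he
  have heI (i) : e i ∈ subgroupInvariants ρ (core n) :=
    Submodule.smul_mem _ _ (hm₁I i)
  have hec : ρ (involution n) ∘ e = e := by
    ext i
    simp [he, apply_involution_apply_involution hn, add_comm]
  have hRe (i) : ρ (involution n) (foxMap ρ e i) = foxMap ρ e i := by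
    conv_rhs => rw [← hec, foxMap_comp_involution heI, Function.comp_apply]
  have hRsub (i) : foxMap ρ (m₁ - e) i = foxMap ρ m i - foxMap ρ e i := by
    rw [map_sub, hm₁R, Pi.sub_apply]
  obtain ⟨m', hm', hm'R⟩ := exists_foxMap_eq_sub_of_odd hn (m := m₁ - e)
    (fun i ↦ sub_mem (hm₁ i) (subgroupInvariants_le_secondInvariants (heI i)))
    (fun i ↦ by
      rw [Pi.sub_apply, map_sub, ← Function.comp_apply (f := ρ (involution n)) (g := e), hec]
      simp only [he]
      match_scalars <;> field)
    (fun i ↦ by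
      rw [hRsub]
      exact sub_mem (hR i) (foxMap_apply_mem (le_comap_invariants ρ _) heI i))
  refine ⟨m', hm', fun i ↦ ?_⟩
  rw [hm'R, hRsub, map_sub, hRe, sub_sub_sub_cancel_right]

end Lifting

end FibonacciGroup

section Imprimitivity

variable {k G Y : Type*} [CommRing k] [Group G] [AddCommGroup Y] [Module k Y]

/-- A system of imprimitivity for `τ` on a finite `G`-set `X`: a decomposition of `Y` into blocks
indexed by `X` and permuted by the group, encoded by the projections onto the blocks. -/
structure ImprimitivitySystem (τ : Representation k G Y) (X : Type*) [MulAction G X] [Fintype X]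
    where
  /-- The projection onto the block at a point. -/
  proj : X → Module.End k Y
  complete : CompleteOrthogonalIdempotents proj
  apply_proj (g : G) (x : X) (y : Y) : τ g (proj x y) = proj (g • x) (τ g y)

namespace ImprimitivitySystem

variable {τ : Representation k G Y} {X : Type*} [MulAction G X] [Fintype X]
  (S : ImprimitivitySystem τ X) {F : Submodule k Y} {y : Y}

lemma sum_proj (y : Y) : ∑ x, S.proj x y = y := by
  rw [← LinearMap.sum_apply, S.complete.complete, Module.End.one_apply]

lemma proj_proj_self (x : X) (y : Y) : S.proj x (S.proj x y) = S.proj x y :=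
  LinearMap.congr_fun (S.complete.idem x) y

lemma proj_proj_of_ne {x x' : X} (h : x ≠ x') (y : Y) : S.proj x (S.proj x' y) = 0 :=
  LinearMap.congr_fun (S.complete.ortho h) y

lemma proj_sum_proj (x : X) (w : X → Y) : S.proj x (∑ x', S.proj x' (w x')) = S.proj x (w x) := by
  rw [map_sum, Finset.sum_eq_single x (fun x' _ h ↦ S.proj_proj_of_ne h.symm _) (by simp),
    proj_proj_self]

lemma eq_zero_of_mem_invariants [MulAction.IsPretransitive G X] (hy : y ∈ τ.invariants) {x : X}
    (h : S.proj x y = 0) : y = 0 := by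
  rw [← S.sum_proj y]
  refine Finset.sum_eq_zero fun x' _ ↦ ?_
  obtain ⟨g, rfl⟩ := MulAction.exists_smul_eq G x x'
  rw [← hy g, ← S.apply_proj, h, map_zero]

/-- The submodules that inherit a system of imprimitivity. -/
structure IsStable (F : Submodule k Y) : Prop where
  le_comap (g : G) : F ≤ F.comap (τ g)
  proj_mem (x : X) : ∀ y ∈ F, S.proj x y ∈ F

variable {S} in
/-- The system of imprimitivity induced on a quotient representation. -/
def quotient (hF : S.IsStable F) : ImprimitivitySystem (τ.quotient F hF.le_comap) X where
  proj x := F.mapQ F (S.proj x) (hF.proj_mem x)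
  complete := CompleteOrthogonalIdempotents.iff_ortho_complete.2
    ⟨fun x x' h ↦ by ext y; simpa using congrArg F.mkQ (S.proj_proj_of_ne h y),
      by ext y; simpa using congrArg F.mkQ (S.sum_proj y)⟩
  apply_proj g x y := by
    obtain ⟨y, rfl⟩ := F.mkQ_surjective y
    exact congrArg F.mkQ (S.apply_proj g x y)

section Sign

/-- Multiplication by a scalar function, constant on each block. -/
def mulFun (s : X → k) : Module.End k Y := ∑ x, s x • S.proj x

lemma mulFun_apply (s : X → k) (y : Y) : S.mulFun s y = ∑ x, S.proj x (s x • y) := by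
  simp [mulFun]

lemma mulFun_mulFun {s : X → k} (hs : ∀ x, s x * s x = 1) (y : Y) :
    S.mulFun s (S.mulFun s y) = y := by
  conv_rhs => rw [← S.sum_proj y]
  rw [S.mulFun_apply s (S.mulFun s y)]
  refine Finset.sum_congr rfl fun x _ ↦ ?_
  rw [map_smul, mulFun_apply, proj_sum_proj, ← map_smul, smul_smul, hs, one_smul]

lemma apply_mulFun {s : X → k} {g : G} (hs : ∀ x, s (g • x) = -s x) (y : Y) :
    τ g (S.mulFun s y) = -S.mulFun s (τ g y) := by
  rw [mulFun_apply, mulFun_apply, map_sum,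
    ← Equiv.sum_comp (MulAction.toPerm g) fun x ↦ S.proj x (s x • τ g y), ← Finset.sum_neg_distrib]
  refine Finset.sum_congr rfl fun x _ ↦ ?_
  rw [S.apply_proj, MulAction.toPerm_apply, hs, map_smul, neg_smul, map_neg, neg_neg]

lemma IsStable.mulFun_mem {S : ImprimitivitySystem τ X} (hF : S.IsStable F) (s : X → k)
    (hy : y ∈ F) : S.mulFun s y ∈ F := by
  rw [mulFun_apply]
  exact sum_mem fun x _ ↦ hF.proj_mem x _ (F.smul_mem _ hy)

end Sign

end ImprimitivitySystem

lemma exists_sign_smul_eq_neg (k : Type*) [CommRing k] {X : Type*} [MulAction G X] {c : G}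
    (hc : c * c = 1) (h : ∀ x : X, c • x ≠ x) :
    ∃ s : X → k, (∀ x, s x * s x = 1) ∧ ∀ x, s (c • x) = -s x := by
  classical
  let : LinearOrder X := linearOrderOfSTO WellOrderingRel
  have hcc (x : X) : c • c • x = x := by rw [smul_smul, hc, one_smul]
  refine ⟨fun x ↦ if x < c • x then 1 else -1, fun x ↦ by dsimp only; split_ifs <;> simp,
    fun x ↦ ?_⟩
  simp only [hcc]
  rcases (h x).lt_or_gt with hx | hx
  · rw [if_pos hx, if_neg hx.not_gt, neg_neg]
  · rw [if_neg hx.not_gt, if_pos hx]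

end Imprimitivity

section BlocksOverQuotient

variable {k G Y : Type*} [CommRing k] [Group G] [AddCommGroup Y] [Module k Y]
  {τ : Representation k G Y} {N : Subgroup G} [N.Normal] [Fintype (G ⧸ N)]
  (S : ImprimitivitySystem τ (G ⧸ N)) {y : Y}

lemma norm_mem_invariants (y : subgroupInvariants τ N) :
    ((quotientToInvariants τ N).norm y : Y) ∈ τ.invariants :=
  fun g ↦ congrArg Subtype.val ((quotientToInvariants τ N).self_norm_apply (g : G ⧸ N) y)

namespace ImprimitivitySystem

lemma proj_mem_subgroupInvariants (hy : y ∈ subgroupInvariants τ N) (q : G ⧸ N) :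
    S.proj q y ∈ subgroupInvariants τ N := by
  refine mem_subgroupInvariants.2 fun h hh ↦ ?_
  obtain ⟨g, rfl⟩ := QuotientGroup.mk_surjective q
  rw [S.apply_proj, mem_subgroupInvariants.1 hy h hh, MulAction.Quotient.smul_coe, smul_eq_mul,
    QuotientGroup.mk_mul, (QuotientGroup.eq_one_iff h).2 hh, one_mul]

lemma isStable_subgroupInvariants : S.IsStable (subgroupInvariants τ N) :=
  ⟨le_comap_invariants τ N, fun q _ hy ↦ S.proj_mem_subgroupInvariants hy q⟩

lemma IsStable.invariantsMod {S : ImprimitivitySystem τ (G ⧸ N)} {F : Submodule k Y}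
    (hF : S.IsStable F) : S.IsStable (invariantsMod τ N F) :=
  ⟨invariantsMod_le_comap hF.le_comap, fun q _ hy ↦ mkQ_mem_subgroupInvariants.1 <|
    (quotient hF).proj_mem_subgroupInvariants (mkQ_mem_subgroupInvariants.2 hy) q⟩

lemma proj_norm (y : subgroupInvariants τ N) (q : G ⧸ N) (hy : S.proj q y = y) :
    S.proj q ((quotientToInvariants τ N).norm y : Y) = y := by
  have h (r : G ⧸ N) : (quotientToInvariants τ N r y : Y) =
      S.proj (r * q) (quotientToInvariants τ N r y : Y) := by
    obtain ⟨g, rfl⟩ := QuotientGroup.mk_surjective r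
    exact (congrArg (τ g) hy.symm).trans (S.apply_proj g q y)
  rw [Representation.norm, LinearMap.sum_apply, AddSubmonoidClass.coe_finsetSum, map_sum,
    Finset.sum_eq_single 1 (fun r _ hr ↦ ?_) (by simp), map_one, Module.End.one_apply, hy]
  rw [h, S.proj_proj_of_ne (by simpa using hr)]

end ImprimitivitySystem

end BlocksOverQuotient

section FiniteDimensional

variable {k V W : Type*} [Field k] [AddCommGroup V] [Module k V] [AddCommGroup W] [Module k W]

/-- The families of vectors indexed by `ι` with all members in `P`. -/
def families (ι : Type*) (P : Submodule k V) : Submodule k (ι → V) := .pi Set.univ fun _ ↦ P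

variable {ι : Type*} {P : Submodule k V}

@[simp]
lemma mem_families {m : ι → V} : m ∈ families ι P ↔ ∀ i, m i ∈ P := by
  simp [families]

lemma finrank_map_add_finrank_inf_ker [Module.Finite k V] (P : Submodule k V) (f : V →ₗ[k] W) :
    finrank k (P.map f) + finrank k (P ⊓ LinearMap.ker f : Submodule k V) = finrank k P := by
  rw [← (f.domRestrict P).finrank_range_add_finrank_ker, LinearMap.range_domRestrict,
    LinearMap.ker_domRestrict, ← P.map_comap_subtype, Submodule.finrank_map_subtype_eq]

lemma finrank_le_finrank_add_of_map_le [Module.Finite k V] [Module.Finite k W]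
    {P F : Submodule k V} {Q : Submodule k W} (f : V →ₗ[k] W) (hQ : P.map f ≤ Q)
    (hF : P ⊓ LinearMap.ker f ≤ F) : finrank k P ≤ finrank k Q + finrank k F := by
  rw [← finrank_map_add_finrank_inf_ker P f]
  exact add_le_add (Submodule.finrank_mono hQ) (Submodule.finrank_mono hF)

lemma finrank_comap_mkQ [Module.Finite k V] (F : Submodule k V) (Q : Submodule k (V ⧸ F)) :
    finrank k (Q.comap F.mkQ) = finrank k Q + finrank k F := by
  rw [← finrank_map_add_finrank_inf_ker (Q.comap F.mkQ) F.mkQ, F.ker_mkQ,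
    Submodule.map_comap_eq_of_surjective F.mkQ_surjective, inf_eq_right.2]
  exact F.le_comap_mkQ Q

lemma finrank_submodule_prod [Module.Finite k V] [Module.Finite k W] (P : Submodule k V)
    (Q : Submodule k W) : finrank k (P.prod Q) = finrank k P + finrank k Q := by
  have hinj : Function.Injective (P.subtype.prodMap Q.subtype) :=
    P.injective_subtype.prodMap Q.injective_subtype
  rw [← finrank_prod, ← LinearMap.finrank_range_of_inj hinj, LinearMap.range_prodMap,
    P.range_subtype, Q.range_subtype]

lemma finrank_families [Module.Finite k V] [Fintype ι] (P : Submodule k V) :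
    finrank k (families ι P) = Fintype.card ι * finrank k P := by
  have h : families ι P = LinearMap.range (P.subtype.compLeft ι) := by
    ext m
    refine mem_families.trans ⟨fun h ↦ ⟨fun i ↦ ⟨m i, h i⟩, rfl⟩, ?_⟩
    rintro ⟨n, rfl⟩ i
    exact (n i).2
  rw [h, LinearMap.finrank_range_of_inj P.injective_subtype.comp_left, finrank_pi_fintype,
    Finset.sum_const, Finset.card_univ, smul_eq_mul]

end FiniteDimensional

section OddPart

variable {k V : Type*} [Field k] [AddCommGroup V] [Module k V]

/-- The part of a submodule on which an endomorphism, typically an involution, acts by `-1`. -/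
def oddPart (f : Module.End k V) (P : Submodule k V) : Submodule k V := P ⊓ LinearMap.ker (f + 1)

variable {f s : Module.End k V} {P : Submodule k V} {v : V}

lemma mem_oddPart : v ∈ oddPart f P ↔ v ∈ P ∧ f v = -v := by
  simp [oddPart, eq_neg_iff_add_eq_zero]

lemma oddPart_le : oddPart f P ≤ P := inf_le_left

variable [NeZero (2 : k)]

lemma map_one_sub_eq_oddPart (hf : ∀ v, f (f v) = v) (hP : P ≤ P.comap f) :
    P.map (1 - f) = oddPart f P := by
  ext v
  rw [mem_oddPart]
  constructor
  · rintro ⟨w, hw, rfl⟩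
    exact ⟨sub_mem hw (hP hw), by simp [hf]⟩
  · rintro ⟨hv, hfv⟩
    refine ⟨(2 : k)⁻¹ • v, P.smul_mem _ hv, ?_⟩
    rw [LinearMap.sub_apply, Module.End.one_apply, map_smul, hfv, smul_neg, sub_neg_eq_add,
      ← smul_add, inv_two_smul_add_self]

lemma finrank_oddPart_add [Module.Finite k V] (hf : ∀ v, f (f v) = v) (hP : P ≤ P.comap f) :
    finrank k (oddPart f P) + finrank k (P ⊓ LinearMap.ker (1 - f) : Submodule k V) =
      finrank k P := by
  rw [← map_one_sub_eq_oddPart hf hP, finrank_map_add_finrank_inf_ker]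

lemma two_mul_finrank_oddPart [Module.Finite k V] (hf : ∀ v, f (f v) = v) (hP : P ≤ P.comap f)
    (hs : ∀ v, s (s v) = v) (hsf : ∀ v, f (s v) = -s (f v)) (hsP : P ≤ P.comap s) :
    2 * finrank k (oddPart f P) = finrank k P := by
  have hinj : Function.Injective s := Function.LeftInverse.injective hs
  have hle : finrank k (oddPart f P) ≤
      finrank k (P ⊓ LinearMap.ker (1 - f) : Submodule k V) := by
    rw [(Submodule.equivMapOfInjective s hinj _).finrank_eq]
    refine Submodule.finrank_mono (Submodule.map_le_iff_le_comap.2 fun v hv ↦ ?_)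
    rw [mem_oddPart] at hv
    exact ⟨hsP hv.1, by simp [hsf, hv.2]⟩
  have hge : finrank k (P ⊓ LinearMap.ker (1 - f) : Submodule k V) ≤
      finrank k (oddPart f P) := by
    rw [(Submodule.equivMapOfInjective s hinj _).finrank_eq]
    refine Submodule.finrank_mono (Submodule.map_le_iff_le_comap.2 fun v hv ↦ ?_)
    have hv' : f v = v := (sub_eq_zero.1 hv.2).symm
    exact mem_oddPart.2 ⟨hsP hv.1, by rw [hsf, hv']⟩
  have := finrank_oddPart_add hf hP
  omega

end OddPart

section Commutator

open scoped commutatorElement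

variable {k G V : Type*} [CommRing k] [Group G] [AddCommGroup V] [Module k V]
  {ρ : Representation k G V} {z : G → V} {c : G}

lemma isTrivial_of_apply_eq_neg_one (hρ : ρ c = -1) :
    IsTrivial (ρ.comp (commutatorClosure c).subtype) := by
  have hcomm (g : G) : Commute (ρ.asGroupHom c) (ρ.asGroupHom g) :=
    Units.ext (by simp [asGroupHom_apply, hρ])
  exact ⟨fun h ↦ congrArg Units.val (commutatorClosure_le_ker hcomm h.2)⟩

lemma IsOneCocycle.apply_commutatorElement (hz : IsOneCocycle ρ z) (hρ : ρ c = -1)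
    (hzc : z c = 0) (g : G) : z ⁅c, g⁆ = -(2 : k) • z g := by
  have hcomm : ρ ⁅c, g⁆ = 1 := (isTrivial_of_apply_eq_neg_one hρ).out
    ⟨_, commutator_mem_commutatorClosure c g⟩
  have h : z (c * g) = z (⁅c, g⁆ * (g * c)) := by group
  rw [hz, hz, hz, hzc, hρ, hcomm, map_zero, add_zero, zero_add, Module.End.one_apply,
    ← sub_eq_iff_eq_add, LinearMap.neg_apply, Module.End.one_apply] at h
  rw [← h, neg_smul, two_smul, neg_add]
  abel

end Commutator

namespace ImprimitivitySystem

variable {k G V Y : Type*} [CommRing k] [Group G] [AddCommGroup V] [Module k V]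
  [AddCommGroup Y] [Module k Y] {τ : Representation k G Y} {N : Subgroup G} [N.Normal]
  [Fintype (G ⧸ N)] (S : ImprimitivitySystem τ (G ⧸ N)) (ρ : Representation k G V)
  [IsTrivial (ρ.comp N.subtype)]

/-- The homomorphism of representations induced by a linear map `w` to the invariants: its
component at the trivial coset is that of `w`. -/
noncomputable def inducedHom : (V →ₗ[k] τ.invariants) →ₗ[k] V →ₗ[k] Y where
  toFun w := ∑ q, S.proj q ∘ₗ τ.invariants.subtype ∘ₗ w ∘ₗ ofQuotient ρ N q⁻¹
  map_add' w w' := by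
    ext v
    simp [Finset.sum_add_distrib]
  map_smul' a w := by
    ext v
    simp [Finset.smul_sum]

lemma inducedHom_apply (w : V →ₗ[k] τ.invariants) (v : V) :
    S.inducedHom ρ w v = ∑ q, S.proj q (w (ofQuotient ρ N q⁻¹ v) : Y) := by
  simp [inducedHom]

variable {ρ} {w : V →ₗ[k] τ.invariants} {v : V}

lemma apply_inducedHom (g : G) : τ g (S.inducedHom ρ w v) = S.inducedHom ρ w (ρ g v) := by
  rw [inducedHom_apply, inducedHom_apply, map_sum, ← Equiv.sum_comp (MulAction.toPerm g)
    fun q ↦ S.proj q (w (ofQuotient ρ N q⁻¹ (ρ g v)) : Y)]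
  refine Finset.sum_congr rfl fun q _ ↦ ?_
  obtain ⟨h, rfl⟩ := QuotientGroup.mk_surjective q
  rw [S.apply_proj, (w _).2 g, MulAction.toPerm_apply, MulAction.Quotient.smul_coe, smul_eq_mul,
    ← QuotientGroup.mk_inv, ← QuotientGroup.mk_inv, ofQuotient_coe_apply, ofQuotient_coe_apply,
    ← Module.End.mul_apply, ← map_mul, mul_inv_rev, inv_mul_cancel_right]

lemma inducedHom_mem_subgroupInvariants : S.inducedHom ρ w v ∈ subgroupInvariants τ N :=
  mem_subgroupInvariants.2 fun h hh ↦ by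
    rw [apply_inducedHom]
    congr 1
    exact isTrivial_apply (ρ.comp N.subtype) ⟨h, hh⟩ v

lemma eq_zero_of_inducedHom_eq_zero (h : S.inducedHom ρ w v = 0) : w v = 0 := by
  refine Subtype.ext (S.eq_zero_of_mem_invariants (x := 1) (w v).2 ?_)
  have h' := S.proj_sum_proj 1 fun q ↦ (w (ofQuotient ρ N q⁻¹ v) : Y)
  rw [← inducedHom_apply, h, map_zero, inv_one, map_one, Module.End.one_apply] at h'
  exact h'.symm

lemma isOneCocycle_inducedHom {z : G → V} (hz : IsOneCocycle ρ z) :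
    IsOneCocycle τ fun g ↦ S.inducedHom ρ w (z g) := fun g h ↦ by
  simp only [hz g h, map_add, apply_inducedHom]

end ImprimitivitySystem

namespace ImprimitivitySystem

section CocycleMap

open scoped commutatorElement

variable {k G V Y : Type*} [Field k] [Group G] [AddCommGroup V] [Module k V]
  [AddCommGroup Y] [Module k Y] {τ : Representation k G Y} {c : G}
  [Fintype (G ⧸ commutatorClosure c)] (S : ImprimitivitySystem τ (G ⧸ commutatorClosure c))
  (ρ : Representation k G V) [IsTrivial (ρ.comp (commutatorClosure c).subtype)] (z : G → V)

/-- The sum of the coboundary of a vector and the image of the cocycle `z` under an induced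
homomorphism, as a linear map in both arguments. -/
noncomputable def cocycleMap : Y × (V →ₗ[k] τ.invariants) →ₗ[k] (G → Y) :=
  LinearMap.pi fun g ↦
    (τ g - 1).coprod (LinearMap.applyₗ (z g) ∘ₗ S.inducedHom ρ)

variable {ρ z} {p : Y} {w : V →ₗ[k] τ.invariants}

lemma cocycleMap_apply (g : G) :
    S.cocycleMap ρ z (p, w) g = τ g p - p + S.inducedHom ρ w (z g) := by
  simp [cocycleMap]

lemma isOneCocycle_cocycleMap (hz : IsOneCocycle ρ z) :
    IsOneCocycle τ (S.cocycleMap ρ z (p, w)) := fun g h ↦ by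
  simp only [cocycleMap_apply, isOneCocycle_apply_sub_self τ p g h,
    S.isOneCocycle_inducedHom hz g h, map_add]
  abel

lemma eq_zero_of_cocycleMap_eq_zero [NeZero (2 : k)] (hρ : ρ c = -1) (hz : IsOneCocycle ρ z)
    (hzc : z c = 0) (hspan : Submodule.span k (Set.range z) = ⊤)
    (hp : p ∈ subgroupInvariants τ (commutatorClosure c)) (h : S.cocycleMap ρ z (p, w) = 0) :
    p ∈ τ.invariants ∧ w = 0 := by
  have hw : w = 0 := by
    refine LinearMap.ext_on_range hspan fun g ↦ ?_
    have hg := congrFun h ⁅c, g⁆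
    rw [cocycleMap_apply, mem_subgroupInvariants.1 hp _ (commutator_mem_commutatorClosure c g),
      sub_self, zero_add] at hg
    have hw := S.eq_zero_of_inducedHom_eq_zero hg
    rw [hz.apply_commutatorElement hρ hzc, map_smul] at hw
    exact (smul_eq_zero_iff_right (neg_ne_zero.2 two_ne_zero)).1 hw
  refine ⟨fun g ↦ sub_eq_zero.1 ?_, hw⟩
  simpa [cocycleMap_apply, hw] using congrFun h g

end CocycleMap

end ImprimitivitySystem

namespace FibonacciGroup

variable {k V Y : Type*} [Field k] [AddCommGroup V] [Module k V] [AddCommGroup Y] [Module k Y]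
  {n : ℕ}

/-- A linear representation of the Fibonacci group on `V` in which the involution acts by `-1`,
together with a 1-cocycle that vanishes at the involution and whose values span `V`. -/
structure IsSpanningCocycle (ρ : Representation k (FibonacciGroup n) V)
    (z : FibonacciGroup n → V) : Prop where
  isOneCocycle : IsOneCocycle ρ z
  apply_involution : ρ (involution n) = -1
  map_involution : z (involution n) = 0
  span_range : Submodule.span k (Set.range z) = ⊤

variable {ρ : Representation k (FibonacciGroup n) V} {z : FibonacciGroup n → V} [NeZero (2 : k)]

lemma involution_notMem_core [Nontrivial V] (hρ : ρ (involution n) = -1) :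
    involution n ∉ core n := fun hc ↦ by
  obtain ⟨v, hv⟩ := exists_ne (0 : V)
  have := isTrivial_of_apply_eq_neg_one hρ
  have hv' : ρ (involution n) v = v := isTrivial_apply (ρ.comp (core n).subtype) ⟨_, hc⟩ v
  rw [hρ, LinearMap.neg_apply, Module.End.one_apply, neg_eq_iff_add_eq_zero, ← two_smul k] at hv'
  exact hv ((smul_eq_zero_iff_right two_ne_zero).1 hv')

variable {τ : Representation k (FibonacciGroup n) Y} [Fintype (FibonacciGroup n ⧸ core n)]
  [Module.Finite k Y]

lemma two_mul_finrank_oddPart_of_isStable {S : ImprimitivitySystem τ (FibonacciGroup n ⧸ core n)}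
    (hn : Odd n) (hc : involution n ∉ core n) {F : Submodule k Y} (hF : S.IsStable F) :
    2 * finrank k (oddPart (τ (involution n)) F) = finrank k F := by
  have hmoved (q : FibonacciGroup n ⧸ core n) : involution n • q ≠ q := by
    obtain ⟨g, rfl⟩ := QuotientGroup.mk_surjective q
    rwa [MulAction.Quotient.smul_coe, smul_eq_mul, QuotientGroup.mk_mul, Ne, mul_eq_right,
      QuotientGroup.eq_one_iff]
  obtain ⟨s, hs, hsc⟩ := exists_sign_smul_eq_neg k (involution_mul_self hn) hmoved
  exact two_mul_finrank_oddPart (apply_involution_apply_involution hn) (hF.le_comap _)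
    (S.mulFun_mulFun hs) (S.apply_mulFun hsc) fun _ ↦ hF.mulFun_mem s

variable [NeZero n] [Module.Finite k V]

lemma finrank_map_foxMap_add_le (S : ImprimitivitySystem τ (FibonacciGroup n ⧸ core n))
    (hz : IsSpanningCocycle ρ z) {P : Submodule k Y} (hP : ∀ g, P ≤ P.comap (τ g))
    (hPle : P ≤ subgroupInvariants τ (core n))
    (hleP : oddPart (τ (involution n)) (subgroupInvariants τ (core n)) ≤ P) :
    finrank k ((families (ZMod n) P).map (foxMap τ)) + finrank k P +
        finrank k V * finrank k τ.invariants ≤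
      n * finrank k P + finrank k (P ⊓ τ.invariants : Submodule k Y) := by
  have := isTrivial_of_apply_eq_neg_one hz.apply_involution
  let D := LinearMap.funLeft k Y (gen (n := n)) ∘ₗ S.cocycleMap ρ z
  have hD (p : Y) (w : V →ₗ[k] τ.invariants) (i : ZMod n) :
      D (p, w) i = τ (gen i) p - p + S.inducedHom ρ w (z (gen i)) := S.cocycleMap_apply _
  have hmap : (P.prod ⊤).map D ≤ families (ZMod n) P ⊓ LinearMap.ker (foxMap τ) := by
    refine Submodule.map_le_iff_le_comap.2 fun ⟨p, w⟩ ⟨hp, _⟩ ↦ ⟨mem_families.2 fun i ↦ ?_, ?_⟩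
    · rw [hD]
      refine add_mem (sub_mem (hP _ hp) hp) (hleP (mem_oddPart.2
        ⟨S.inducedHom_mem_subgroupInvariants, ?_⟩))
      rw [S.apply_inducedHom, hz.apply_involution, LinearMap.neg_apply, Module.End.one_apply,
        map_neg]
    · exact foxMap_eq_zero_of_isOneCocycle (S.isOneCocycle_cocycleMap hz.isOneCocycle)
  have hker : P.prod ⊤ ⊓ LinearMap.ker D ≤ (P ⊓ τ.invariants).prod ⊥ := by
    rintro ⟨p, w⟩ ⟨⟨hp, _⟩, h⟩
    have hzero : S.cocycleMap ρ z (p, w) = 0 := funext <|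
      eq_zero_of_isOneCocycle (S.isOneCocycle_cocycleMap hz.isOneCocycle) (congrFun h)
    obtain ⟨hpJ, hw⟩ := S.eq_zero_of_cocycleMap_eq_zero hz.apply_involution hz.isOneCocycle
      hz.map_involution hz.span_range (hPle hp) hzero
    exact ⟨⟨hp, hpJ⟩, hw⟩
  have hrank := finrank_map_add_finrank_inf_ker (families (ZMod n) P) (foxMap τ)
  have hle := finrank_le_finrank_add_of_map_le D hmap hker
  rw [finrank_submodule_prod, finrank_submodule_prod, finrank_bot, finrank_top,
    finrank_linearMap] at hle
  rw [finrank_families, ZMod.card] at hrank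
  omega

lemma finrank_map_foxMap_subgroupInvariants_add_le
    (S : ImprimitivitySystem τ (FibonacciGroup n ⧸ core n)) (hz : IsSpanningCocycle ρ z) :
    finrank k ((families (ZMod n) (subgroupInvariants τ (core n))).map (foxMap τ)) +
        finrank k (subgroupInvariants τ (core n)) + finrank k V * finrank k τ.invariants ≤
      n * finrank k (subgroupInvariants τ (core n)) + finrank k τ.invariants :=
  (finrank_map_foxMap_add_le S hz (fun g _ ↦ apply_mem_subgroupInvariants (g := g)) le_rfl
    oddPart_le).trans (Nat.add_le_add_left (Submodule.finrank_mono inf_le_right) _)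

lemma two_mul_finrank_add_le_of_map_le (S : ImprimitivitySystem τ (FibonacciGroup n ⧸ core n))
    (hn : Odd n) (hc : involution n ∉ core n) (hz : IsSpanningCocycle ρ z)
    {Q : Submodule k (ZMod n → Y)} (hQI : Q ≤ families (ZMod n) (subgroupInvariants τ (core n)))
    (hQ : Q.map ((1 - τ (involution n)).compLeft (ZMod n)) ≤
      (families (ZMod n) (oddPart (τ (involution n)) (subgroupInvariants τ (core n)))).map
        (foxMap τ)) :
    2 * finrank k Q + 2 * (finrank k V * finrank k τ.invariants) +
        finrank k (subgroupInvariants τ (core n)) ≤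
      2 * (n * finrank k (subgroupInvariants τ (core n))) := by
  set I := subgroupInvariants τ (core n)
  have hI (g : FibonacciGroup n) : I ≤ I.comap (τ g) := fun _ ↦ (apply_mem_subgroupInvariants · g)
  have hodd (g : FibonacciGroup n) :
      oddPart (τ (involution n)) I ≤ (oddPart (τ (involution n)) I).comap (τ g) := fun v hv ↦ by
    rw [mem_oddPart] at hv
    refine mem_oddPart.2 ⟨hI g hv.1, ?_⟩
    rw [apply_comm_of_mem_invariants hv.1, hv.2, map_neg]
  have hinf : oddPart (τ (involution n)) I ⊓ τ.invariants = ⊥ := by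
    refine eq_bot_iff.2 fun v ⟨hv, hv'⟩ ↦ (smul_eq_zero_iff_right (two_ne_zero (α := k))).1 ?_
    rw [two_smul, ← eq_neg_iff_add_eq_zero, ← (mem_oddPart.1 hv).2, hv']
  have hrank := finrank_map_foxMap_add_le S hz hodd oddPart_le le_rfl
  have hker : Q ⊓ LinearMap.ker ((1 - τ (involution n)).compLeft (ZMod n)) ≤
      families (ZMod n) (I ⊓ LinearMap.ker (1 - τ (involution n))) := fun m hm ↦
    mem_families.2 fun i ↦ ⟨mem_families.1 (hQI hm.1) i, LinearMap.mem_ker.2 (congrFun hm.2 i)⟩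
  have hle := finrank_le_finrank_add_of_map_le _ hQ hker
  have hhalf := two_mul_finrank_oddPart_of_isStable hn hc S.isStable_subgroupInvariants
  have hadd := finrank_oddPart_add (apply_involution_apply_involution (ρ := τ) hn)
    (hI (involution n))
  rw [hinf, finrank_bot] at hrank
  rw [finrank_families, ZMod.card] at hle
  nlinarith

end FibonacciGroup

section UpperInvariants

variable {k G Y : Type*} [CommRing k] [Group G] [AddCommGroup Y] [Module k Y]
  {τ : Representation k G Y} {N : Subgroup G} {F : Submodule k Y}

lemma comap_mkQ_subgroupInvariants (hF : ∀ g, F ≤ F.comap (τ g)) :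
    (subgroupInvariants (τ.quotient F hF) N).comap F.mkQ = invariantsMod τ N F :=
  Submodule.ext fun _ ↦ mkQ_mem_subgroupInvariants

lemma comap_mkQ_secondInvariants (hF : ∀ g, F ≤ F.comap (τ g)) :
    (secondInvariants (τ.quotient F hF) N).comap F.mkQ = invariantsMod τ N (invariantsMod τ N F) :=
  Submodule.ext fun _ ↦ forall₂_congr fun _ _ ↦ mkQ_mem_subgroupInvariants

end UpperInvariants

namespace FibonacciGroup

variable {k Y : Type*} [Field k] [AddCommGroup Y] [Module k Y] {n : ℕ}
  {τ : Representation k (FibonacciGroup n) Y} {F : Submodule k Y}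

lemma foxMap_quotient (hF : ∀ g, F ≤ F.comap (τ g)) (m : ZMod n → Y) :
    foxMap (τ.quotient F hF) (F.mkQ ∘ m) = F.mkQ ∘ foxMap τ m :=
  foxMap_comp fun _ ↦ rfl

lemma exists_foxMap_quotient_eq [NeZero (2 : k)]
    [NeZero (Nat.card (FibonacciGroup n ⧸ core n) : k)]
    [NeZero (Nat.card (FibonacciGroup n ⧸ Subgroup.normalClosure {involution n}) : k)]
    (hn : Odd n) (hF : ∀ g, F ≤ F.comap (τ g)) {m : ZMod n → Y}
    (hm : ∀ i, m i ∈ invariantsMod τ (core n) (invariantsMod τ (core n) F))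
    (hR : ∀ i, foxMap τ m i ∈ invariantsMod τ (core n) F) :
    ∃ m' ∈ families (ZMod n) (oddPart (τ.quotient F hF (involution n))
        (subgroupInvariants (τ.quotient F hF) (core n))),
      foxMap (τ.quotient F hF) m' =
        (1 - τ.quotient F hF (involution n)).compLeft (ZMod n) (F.mkQ ∘ foxMap τ m) := by
  have hmQ (i : ZMod n) : (F.mkQ ∘ m) i ∈ secondInvariants (τ.quotient F hF) (core n) :=
    (comap_mkQ_secondInvariants hF).ge (hm i)
  have hRQ (i : ZMod n) : foxMap (τ.quotient F hF) (F.mkQ ∘ m) i ∈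
      subgroupInvariants (τ.quotient F hF) (core n) := by
    rw [foxMap_quotient]
    exact mkQ_mem_subgroupInvariants.2 (hR i)
  obtain ⟨m', hm', h⟩ := exists_foxMap_eq_sub hn hmQ hRQ
  refine ⟨m', mem_families.2 fun i ↦ mem_oddPart.2 (hm' i), funext fun i ↦ (h i).trans ?_⟩
  rw [foxMap_quotient]
  rfl

variable [NeZero n]

section RelSum

/-- The linear map expressing the dependence between the relators of the Fibonacci group: it sends
the values of `foxMap` to vectors that are fixed by the involution. -/
def relSum (τ : Representation k (FibonacciGroup n) Y) : (ZMod n → Y) →ₗ[k] Y :=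
  ∑ i, (1 + τ (gen (i + 1))) ∘ₗ LinearMap.proj i

variable (τ) in
lemma relSum_apply (m : ZMod n → Y) : relSum τ m = ∑ i, (m i + τ (gen (i + 1)) (m i)) := by
  simp [relSum]

variable (τ) in
lemma relSum_single (i : ZMod n) (y : Y) :
    relSum τ (Pi.single i y) = y + τ (gen (i + 1)) y := by
  rw [relSum_apply, Finset.sum_eq_single i (fun j _ hj ↦ by simp [hj]) (by simp), Pi.single_eq_same]

variable (τ) in
lemma relSum_foxMap (hn : Odd n) (m : ZMod n → Y) :
    relSum τ (foxMap τ m) =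
      ∑ i, (τ (gen (i + 1)) (m i) + τ (involution n) (τ (gen (i + 1)) (m i))) := by
  let t (i : ZMod n) : Y := m i + m (i + 1) + τ (gen i) (m (i + 1)) -
    τ (involution n) (τ (gen (i + 1)) (m i))
  have hterm (i : ZMod n) : foxMap τ m i + τ (gen (i + 1)) (foxMap τ m i) =
      τ (gen (i + 1)) (m i) + τ (involution n) (τ (gen (i + 1)) (m i)) + (t i - t (i + 1)) := by
    have hswap : τ (gen (i + 1)) (τ (gen i) (m (i + 1))) =
        τ (involution n) (τ (gen (i + 2)) (m (i + 1))) := by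
      simp only [← Module.End.mul_apply, ← map_mul, gen_add_one_mul_gen hn]
    simp only [foxMap_apply, map_add, map_sub, hswap, t, add_assoc, one_add_one_eq_two]
    abel
  have hshift : ∑ i, t (i + 1) = ∑ i, t i := Equiv.sum_comp (Equiv.addRight 1) t
  rw [relSum_apply, Finset.sum_congr rfl fun i _ ↦ hterm i, Finset.sum_add_distrib,
    Finset.sum_sub_distrib, hshift, sub_self, add_zero]

variable (τ) in
lemma sub_involution_relSum_foxMap (hn : Odd n) (m : ZMod n → Y) :
    (1 - τ (involution n)) (relSum τ (foxMap τ m)) = 0 := by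
  rw [relSum_foxMap τ hn, map_sum]
  refine Finset.sum_eq_zero fun i _ ↦ ?_
  rw [LinearMap.sub_apply, Module.End.one_apply, map_add, apply_involution_apply_involution hn,
    add_comm, sub_self]

variable [NeZero (2 : k)]

lemma map_relSum_families (hF : ∀ g, F ≤ F.comap (τ g)) :
    (families (ZMod n) F).map (relSum τ) = F := by
  refine le_antisymm (Submodule.map_le_iff_le_comap.2 fun m hm ↦ ?_) fun y hy ↦ ?_
  · rw [Submodule.mem_comap, relSum_apply]
    exact sum_mem fun i _ ↦ add_mem (mem_families.1 hm i) (hF _ (mem_families.1 hm i))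
  · have hsingle {v : Y} (hv : v ∈ F) (i : ZMod n) : Pi.single i v ∈ families (ZMod n) F :=
      mem_families.2 fun j ↦ by
        obtain rfl | h := eq_or_ne j i
        · rwa [Pi.single_eq_same]
        · simp [h]
    refine ⟨(2 : k)⁻¹ • (Pi.single 0 y + Pi.single 1 y - Pi.single (-1) (τ (gen 1) y)),
      Submodule.smul_mem _ _ (sub_mem (add_mem (hsingle hy 0) (hsingle hy 1))
        (hsingle (hF _ hy) (-1))), ?_⟩
    have hgen : τ (gen (0 : ZMod n)) (τ (gen 1) y) = τ (gen (1 + 1)) y := by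
      rw [← Module.End.mul_apply, ← map_mul, one_add_one_eq_two, ← zero_add 2, ← gen_mul_gen,
        zero_add]
    rw [map_smul, map_sub, map_add, relSum_single, relSum_single, relSum_single, zero_add,
      neg_add_cancel, hgen]
    convert inv_two_smul_add_self (k := k) y using 2
    abel

variable [Module.Finite k Y] [Fintype (FibonacciGroup n ⧸ core n)]

lemma two_mul_finrank_families_inf_ker_add {S : ImprimitivitySystem τ (FibonacciGroup n ⧸ core n)}
    (hn : Odd n) (hc : involution n ∉ core n) (hF : S.IsStable F) :
    2 * finrank k (families (ZMod n) F ⊓ LinearMap.ker ((1 - τ (involution n)) ∘ₗ relSum τ) :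
        Submodule k (ZMod n → Y)) + finrank k F = 2 * (n * finrank k F) := by
  have h := finrank_map_add_finrank_inf_ker (families (ZMod n) F)
    ((1 - τ (involution n)) ∘ₗ relSum τ)
  rw [Submodule.map_comp, map_relSum_families hF.le_comap,
    map_one_sub_eq_oddPart (apply_involution_apply_involution hn) (hF.le_comap _),
    finrank_families, ZMod.card] at h
  have := two_mul_finrank_oddPart_of_isStable hn hc hF
  omega

end RelSum

section Quotient

variable {V : Type*} [AddCommGroup V] [Module k V] {ρ : Representation k (FibonacciGroup n) V}
  {z : FibonacciGroup n → V} [Module.Finite k Y]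

lemma finrank_families_lt_finrank_map_foxMap_add (hF : ∀ g, F ≤ F.comap (τ g))
    (hexact : ∀ m, foxMap τ m = 0 → ∃ p, ∀ i, m i = τ (gen i) p - p) (hτ : τ.invariants ≠ ⊥) :
    n * finrank k F < finrank k ((families (ZMod n) F).map (foxMap τ)) +
      (finrank k (τ.quotient F hF).invariants + finrank k F) := by
  let B : Y →ₗ[k] (ZMod n → Y) := LinearMap.pi fun i ↦ τ (gen i) - 1
  let P := (τ.quotient F hF).invariants.comap F.mkQ
  have hle : families (ZMod n) F ⊓ LinearMap.ker (foxMap τ) ≤ P.map B := fun m ⟨hm, hker⟩ ↦ by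
    obtain ⟨p, hp⟩ := hexact m hker
    have hpF (i : ZMod n) : τ (gen i) p - p ∈ F := hp i ▸ mem_families.1 hm i
    exact ⟨p, fun g ↦ sub_eq_zero.1 <| eq_zero_of_isOneCocycle (isOneCocycle_apply_sub_self _ _)
      (fun i ↦ (Submodule.Quotient.mk_eq_zero F).2 (hpF i)) g, funext fun i ↦ (hp i).symm⟩
  have hJ : τ.invariants ≤ P ⊓ LinearMap.ker B := fun p hp ↦
    ⟨mkQ_mem_invariants.2 fun g ↦ by simp [hp g], by ext i; simp [B, hp (gen i)]⟩
  have hpos := (Submodule.one_le_finrank_iff.2 hτ).trans (Submodule.finrank_mono hJ)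
  have hB := finrank_map_add_finrank_inf_ker P B
  have hfox := finrank_map_add_finrank_inf_ker (families (ZMod n) F) (foxMap τ)
  have := Submodule.finrank_mono hle
  rw [finrank_comap_mkQ] at hB
  rw [finrank_families, ZMod.card] at hfox
  omega

variable [Fintype (FibonacciGroup n ⧸ core n)] [NeZero (2 : k)] [Module.Finite k V]
  {S : ImprimitivitySystem τ (FibonacciGroup n ⧸ core n)}

lemma finrank_map_foxMap_invariantsMod_add_le (hz : IsSpanningCocycle ρ z) (hF : S.IsStable F) :
    finrank k ((families (ZMod n) (invariantsMod τ (core n) F)).map (foxMap τ)) +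
        finrank k (subgroupInvariants (τ.quotient F hF.le_comap) (core n)) +
        finrank k V * finrank k (τ.quotient F hF.le_comap).invariants ≤
      n * finrank k (subgroupInvariants (τ.quotient F hF.le_comap) (core n)) +
        finrank k (τ.quotient F hF.le_comap).invariants +
        finrank k ((families (ZMod n) (invariantsMod τ (core n) F)).map (foxMap τ) ⊓
          families (ZMod n) F : Submodule k (ZMod n → Y)) := by
  have hmap : ((families (ZMod n) (invariantsMod τ (core n) F)).map (foxMap τ)).map
      (F.mkQ.compLeft (ZMod n)) ≤ (families (ZMod n)
        (subgroupInvariants (τ.quotient F hF.le_comap) (core n))).map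
          (foxMap (τ.quotient F hF.le_comap)) := by
    rintro _ ⟨_, ⟨m, hm, rfl⟩, rfl⟩
    exact ⟨F.mkQ ∘ m, mem_families.2 fun i ↦
      mkQ_mem_subgroupInvariants.2 (mem_families.1 hm i), foxMap_quotient hF.le_comap m⟩
  have hker : (families (ZMod n) (invariantsMod τ (core n) F)).map (foxMap τ) ⊓
        LinearMap.ker (F.mkQ.compLeft (ZMod n)) ≤
      (families (ZMod n) (invariantsMod τ (core n) F)).map (foxMap τ) ⊓ families (ZMod n) F :=
    inf_le_inf_left _ fun m hm ↦ mem_families.2 fun i ↦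
      (Submodule.Quotient.mk_eq_zero F).1 (congrFun hm i)
  have hle := finrank_le_finrank_add_of_map_le _ hmap hker
  have hquot := finrank_map_foxMap_subgroupInvariants_add_le (ImprimitivitySystem.quotient hF) hz
  omega

lemma two_mul_finrank_map_inf_families_add_le
    [NeZero (Nat.card (FibonacciGroup n ⧸ core n) : k)]
    [NeZero (Nat.card (FibonacciGroup n ⧸ Subgroup.normalClosure {involution n}) : k)]
    (hn : Odd n) (hc : involution n ∉ core n) (hz : IsSpanningCocycle ρ z) (hF : S.IsStable F) :
    2 * finrank k ((families (ZMod n) (invariantsMod τ (core n) (invariantsMod τ (core n) F))).map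
          (foxMap τ) ⊓ families (ZMod n) (invariantsMod τ (core n) F) :
        Submodule k (ZMod n → Y)) +
      2 * (finrank k V * finrank k (τ.quotient F hF.le_comap).invariants) +
        finrank k (invariantsMod τ (core n) F) ≤
      2 * (n * finrank k (invariantsMod τ (core n) F)) := by
  set X := (families (ZMod n) (invariantsMod τ (core n) (invariantsMod τ (core n) F))).map
    (foxMap τ) ⊓ families (ZMod n) (invariantsMod τ (core n) F)
  have hker : X ⊓ LinearMap.ker (F.mkQ.compLeft (ZMod n)) ≤
      families (ZMod n) F ⊓ LinearMap.ker ((1 - τ (involution n)) ∘ₗ relSum τ) := by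
    rintro _ ⟨⟨⟨m, -, rfl⟩, -⟩, hm⟩
    exact ⟨mem_families.2 fun i ↦ (Submodule.Quotient.mk_eq_zero F).1 (congrFun hm i),
      sub_involution_relSum_foxMap τ hn m⟩
  have hXI : X.map (F.mkQ.compLeft (ZMod n)) ≤
      families (ZMod n) (subgroupInvariants (τ.quotient F hF.le_comap) (core n)) := by
    rintro _ ⟨R, ⟨-, hR⟩, rfl⟩
    exact mem_families.2 fun i ↦ mkQ_mem_subgroupInvariants.2 (mem_families.1 hR i)
  have hodd : (X.map (F.mkQ.compLeft (ZMod n))).map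
      ((1 - τ.quotient F hF.le_comap (involution n)).compLeft (ZMod n)) ≤
        (families (ZMod n) (oddPart (τ.quotient F hF.le_comap (involution n))
          (subgroupInvariants (τ.quotient F hF.le_comap) (core n)))).map
            (foxMap (τ.quotient F hF.le_comap)) := by
    rintro _ ⟨_, ⟨_, ⟨⟨m, hm, rfl⟩, hR⟩, rfl⟩, rfl⟩
    exact exists_foxMap_quotient_eq hn hF.le_comap (mem_families.1 hm) (mem_families.1 hR)
  have hle := finrank_le_finrank_add_of_map_le _ le_rfl hker
  have hquot := two_mul_finrank_add_le_of_map_le (ImprimitivitySystem.quotient hF) hn hc hz hXI hodd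
  have hrel := two_mul_finrank_families_inf_ker_add hn hc hF
  rw [← comap_mkQ_subgroupInvariants hF.le_comap, finrank_comap_mkQ]
  nlinarith

end Quotient

end FibonacciGroup

section Recursion

open Finset

variable {M r : ℕ} {d L U : ℕ → ℕ}

lemma mul_sum_le_of_recursion (hM : 2 * M + 4 ≤ r ^ 2) (hd : ∀ j, d j ≤ M * ∑ i ∈ range j, U i)
    (hU₁ : 1 + r * U 0 ≤ U 1 + U 0)
    (hU : ∀ j, 2 + 2 * (r * U (j + 1)) + 2 * (r * U j) ≤
      2 * U (j + 2) + 2 * U (j + 1) + d (j + 1)) (j : ℕ) :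
    r * ∑ i ∈ range j, U i ≤ 2 * U j + 2 * ∑ i ∈ range j, U i := by
  induction j using Nat.twoStepInduction with
  | zero => simp
  | one => simp only [sum_range_one]; omega
  | more j ih₀ ih₁ =>
    have hMc := Nat.mul_le_mul_right (∑ i ∈ range (j + 1), U i) hM
    have hrc := Nat.mul_le_mul_left r ih₁
    have hsum := sum_range_succ U j
    have hUj := hU j
    have hdj := hd (j + 1)
    rw [sum_range_succ U (j + 1)]
    nlinarith

lemma exists_lt_of_recursion (hM : 2 * M + 4 ≤ r ^ 2) (hd₀ : d 0 = 0)
    (hd : ∀ j, d (j + 1) = L j + d j) (hUL : ∀ j, U j ≤ L j) (hLM : ∀ j, L j ≤ M * U j)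
    (hU₁ : 1 + r * U 0 ≤ U 1 + U 0)
    (hU : ∀ j, 2 + 2 * (r * U (j + 1)) + 2 * (r * U j) ≤
      2 * U (j + 2) + 2 * U (j + 1) + d (j + 1)) (B : ℕ) : ∃ j, B < d j := by
  have hdL (j : ℕ) : d j = ∑ i ∈ range j, L i := by
    induction j with
    | zero => exact hd₀
    | succ j ih => rw [hd, ih, sum_range_succ, add_comm]
  have hdM (j : ℕ) : d j ≤ M * ∑ i ∈ range j, U i := by
    rw [hdL, mul_sum]
    exact sum_le_sum fun i _ ↦ hLM i
  have hr : 2 ≤ r := by nlinarith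
  have hpos : 0 < U 1 := by nlinarith
  have hMpos : 0 < M := Nat.pos_of_mul_pos_right (hpos.trans_le ((hUL 1).trans (hLM 1)))
  have hr' : 3 ≤ r := by nlinarith
  have hgrow (j : ℕ) : j < ∑ i ∈ range (j + 2), U i := by
    induction j with
    | zero => simp [sum_range_succ, hpos]
    | succ j ih =>
      have := mul_sum_le_of_recursion hM hdM hU₁ hU (j + 2)
      rw [sum_range_succ]
      nlinarith
  exact ⟨B + 2, (hgrow B).trans_le ((sum_le_sum fun i _ ↦ hUL i).trans_eq (hdL _).symm)⟩

end Recursion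

section UpperInvariants

variable {k G Y : Type*} [Field k] [Group G] [AddCommGroup Y] [Module k Y]
  {τ : Representation k G Y} {N : Subgroup G}

lemma invariants_le_subgroupInvariants : τ.invariants ≤ subgroupInvariants τ N :=
  fun _ hv ↦ mem_subgroupInvariants.2 fun h _ ↦ hv h

/-- The ascending series of submodules in which each quotient of consecutive terms consists of the
vectors fixed by `N` modulo the smaller term. -/
def upperInvariants (τ : Representation k G Y) (N : Subgroup G) : ℕ → Submodule k Y
  | 0 => ⊥
  | j + 1 => invariantsMod τ N (upperInvariants τ N j)

namespace ImprimitivitySystem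

variable [N.Normal] [Fintype (G ⧸ N)]

lemma isStable_upperInvariants (S : ImprimitivitySystem τ (G ⧸ N)) (j : ℕ) :
    S.IsStable (upperInvariants τ N j) := by
  induction j with
  | zero => exact ⟨fun g ↦ bot_le, fun q y hy ↦ by simp [(Submodule.mem_bot k).1 hy]⟩
  | succ j ih => exact ih.invariantsMod

lemma finrank_subgroupInvariants_le [Module.Finite k Y] (S : ImprimitivitySystem τ (G ⧸ N)) :
    finrank k (subgroupInvariants τ N) ≤ Nat.card (G ⧸ N) * finrank k τ.invariants := by
  let T : subgroupInvariants τ N →ₗ[k] G ⧸ N → τ.invariants := LinearMap.pi fun q ↦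
    ((subgroupInvariants τ N).subtype ∘ₗ (quotientToInvariants τ N).norm ∘ₗ
      (S.proj q).restrict fun _ hy ↦ S.proj_mem_subgroupInvariants hy q).codRestrict τ.invariants
        fun _ ↦ norm_mem_invariants _
  have hT : Function.Injective T := (injective_iff_map_eq_zero T).2 fun y hy ↦ Subtype.ext <| by
    rw [← S.sum_proj (y : Y)]
    refine Finset.sum_eq_zero fun q _ ↦ ?_
    have hq : ((T y q : τ.invariants) : Y) = 0 := congrArg Subtype.val (congrFun hy q)
    have h := S.proj_norm ((S.proj q).restrict (fun _ hy ↦ S.proj_mem_subgroupInvariants hy q) y) q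
      (S.proj_proj_self q y)
    exact h.symm.trans ((congrArg (S.proj q) hq).trans (map_zero _))
  simpa [finrank_pi_fintype, Nat.card_eq_fintype_card] using
    LinearMap.finrank_le_finrank_of_injective hT

end ImprimitivitySystem

lemma finrank_invariantsMod [Module.Finite k Y] {F : Submodule k Y}
    (hF : ∀ g, F ≤ F.comap (τ g)) : finrank k (invariantsMod τ N F) =
      finrank k (subgroupInvariants (τ.quotient F hF) N) + finrank k F := by
  rw [← finrank_comap_mkQ, comap_mkQ_subgroupInvariants hF]

end UpperInvariants

namespace FibonacciGroup

variable {k V Y : Type*} [Field k] [AddCommGroup V] [Module k V] [AddCommGroup Y] [Module k Y]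
  {n : ℕ} {ρ : Representation k (FibonacciGroup n) V} {z : FibonacciGroup n → V}
  {τ : Representation k (FibonacciGroup n) Y} [Fintype (FibonacciGroup n ⧸ core n)]
  [NeZero (2 : k)] [NeZero (Nat.card (FibonacciGroup n ⧸ core n) : k)]
  [NeZero (Nat.card (FibonacciGroup n ⧸ Subgroup.normalClosure {involution n}) : k)]
  [Module.Finite k V] [Module.Finite k Y]

theorem exists_lt_finrank_upperInvariants (S : ImprimitivitySystem τ (FibonacciGroup n ⧸ core n))
    (hn : Odd n) (hz : IsSpanningCocycle ρ z)
    (hr : 2 * Nat.card (FibonacciGroup n ⧸ core n) + 4 ≤ finrank k V ^ 2)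
    (hexact : ∀ m, foxMap τ m = 0 → ∃ p, ∀ i, m i = τ (gen i) p - p) (hτ : τ.invariants ≠ ⊥)
    (B : ℕ) : ∃ j, B < finrank k (upperInvariants τ (core n) j) := by
  have : NeZero n := ⟨hn.pos.ne'⟩
  have : Nontrivial V :=
    nontrivial_of_finrank_pos (R := k) (Nat.pos_of_ne_zero fun h ↦ by simp [h] at hr)
  have hc := involution_notMem_core hz.apply_involution
  have hF := S.isStable_upperInvariants
  let d (j : ℕ) := finrank k (upperInvariants τ (core n) j)
  let L (j : ℕ) := finrank k (subgroupInvariants (τ.quotient _ (hF j).le_comap) (core n))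
  let U (j : ℕ) := finrank k (τ.quotient _ (hF j).le_comap).invariants
  let R (j : ℕ) := (families (ZMod n) (upperInvariants τ (core n) j)).map (foxMap τ)
  let X (j : ℕ) := finrank k
    (R (j + 1) ⊓ families (ZMod n) (upperInvariants τ (core n) j) : Submodule k (ZMod n → Y))
  have hd₀ : d 0 = 0 := finrank_bot k Y
  have hd (j : ℕ) : d (j + 1) = L j + d j := finrank_invariantsMod (hF j).le_comap
  have hX₀ : X 0 = 0 := Nat.le_zero.1 <| (Submodule.finrank_mono inf_le_right).trans_eq <| by
    rw [finrank_families, upperInvariants, finrank_bot, mul_zero]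
  have hexactness (j : ℕ) : n * d j < finrank k (R j) + (U j + d j) :=
    finrank_families_lt_finrank_map_foxMap_add (hF j).le_comap hexact hτ
  have hfirst (j : ℕ) :
      finrank k (R (j + 1)) + L j + finrank k V * U j ≤ n * L j + U j + X j :=
    finrank_map_foxMap_invariantsMod_add_le hz (hF j)
  have hsecond (j : ℕ) :
      2 * X (j + 1) + 2 * (finrank k V * U j) + d (j + 1) ≤ 2 * (n * d (j + 1)) :=
    two_mul_finrank_map_inf_families_add_le hn hc hz (hF j)
  have hU₁ : 1 + finrank k V * U 0 ≤ U (0 + 1) + U 0 := by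
    have h := hexactness (0 + 1)
    rw [hd, hd₀, add_zero] at h
    have := hfirst 0
    omega
  have hU (j : ℕ) : 2 + 2 * (finrank k V * U (j + 1)) + 2 * (finrank k V * U j) ≤
      2 * U (j + 1 + 1) + 2 * U (j + 1) + d (j + 1) := by
    have h := hexactness (j + 1 + 1)
    rw [hd, mul_add] at h
    have := hfirst (j + 1)
    have := hsecond j
    omega
  exact exists_lt_of_recursion hr hd₀ hd
    (fun _ ↦ Submodule.finrank_mono invariants_le_subgroupInvariants)
    (fun j ↦ (ImprimitivitySystem.quotient (hF j)).finrank_subgroupInvariants_le) hU₁ hU B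

end FibonacciGroup

section RegularRepresentation

variable (k G : Type*) [Field k] [Group G]

/-- The left regular representation of `G`, on the functions on `G`. -/
def functionRep : Representation k G (G → k) where
  toFun g := LinearMap.funLeft k k (g⁻¹ * ·)
  map_one' := by ext; simp
  map_mul' g h := by
    ext f x
    simp [mul_assoc]

variable {k G}

lemma functionRep_apply (g : G) (f : G → k) (x : G) : functionRep k G g f x = f (g⁻¹ * x) := rfl

variable (k) in
/-- The system of imprimitivity of the regular representation whose blocks consist of the functions
supported on a coset of `N`. -/
def cosetImprimitivity (N : Subgroup G) [Fintype (G ⧸ N)] [DecidableEq (G ⧸ N)] :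
    ImprimitivitySystem (functionRep k G) (G ⧸ N) where
  proj q := LinearMap.mulLeft k fun x ↦ if (x : G ⧸ N) = q then 1 else 0
  complete := CompleteOrthogonalIdempotents.iff_ortho_complete.2
    ⟨fun q q' h ↦ by
      ext f x
      by_cases hx : (x : G ⧸ N) = q <;> simp [hx, h],
    by
      ext f x
      simp⟩
  apply_proj g q f := by
    ext x
    simp [functionRep_apply, ← inv_smul_eq_iff]

lemma invariants_functionRep_ne_bot : (functionRep k G).invariants ≠ ⊥ :=
  (Submodule.ne_bot_iff _).2 ⟨1, fun _ ↦ rfl, one_ne_zero⟩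

lemma IsOneCocycle.exists_eq_functionRep_sub_self {f : G → G → k}
    (hf : IsOneCocycle (functionRep k G) f) :
    ∃ p, ∀ g, f g = functionRep k G g p - p := by
  refine ⟨fun x ↦ -f x x, fun g ↦ ?_⟩
  ext x
  have h := congrFun (hf g (g⁻¹ * x)) x
  rw [mul_inv_cancel_left, Pi.add_apply, functionRep_apply] at h
  rw [Pi.sub_apply, functionRep_apply, h]
  ring

end RegularRepresentation

namespace FibonacciGroup

variable {k V : Type*} [Field k] [AddCommGroup V] [Module k V] [Module.Finite k V] {n : ℕ}
  {ρ : Representation k (FibonacciGroup n) V} {z : FibonacciGroup n → V}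
  [NeZero (2 : k)] [NeZero (Nat.card (FibonacciGroup n ⧸ core n) : k)]
  [NeZero (Nat.card (FibonacciGroup n ⧸ Subgroup.normalClosure {involution n}) : k)]

theorem infinite_of_isSpanningCocycle (hn : Odd n) (hz : IsSpanningCocycle ρ z)
    (hr : 2 * Nat.card (FibonacciGroup n ⧸ core n) + 4 ≤ finrank k V ^ 2) :
    Infinite (FibonacciGroup n) := by
  classical
  refine not_finite_iff_infinite.1 fun _ ↦ ?_
  have := Fintype.ofFinite (FibonacciGroup n ⧸ core n)
  have hexact (m : ZMod n → FibonacciGroup n → k) (hm : foxMap (functionRep k _) m = 0) :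
      ∃ p, ∀ i, m i = functionRep k _ (gen i) p - p := by
    obtain ⟨f, hf, hfm⟩ := exists_isOneCocycle hm
    obtain ⟨p, hp⟩ := hf.exists_eq_functionRep_sub_self
    exact ⟨p, fun i ↦ by rw [← hfm, hp]⟩
  obtain ⟨j, hj⟩ := exists_lt_finrank_upperInvariants (cosetImprimitivity k (core n)) hn hz hr
    hexact invariants_functionRep_ne_bot (finrank k (FibonacciGroup n → k))
  exact hj.not_ge (Submodule.finrank_le _)

end FibonacciGroup

section MatrixRep

variable {k G m n : Type*} [CommRing k] [Group G] [Fintype m] [DecidableEq m] [Fintype n]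
  [DecidableEq n]

/-- The tensor product of two matrix representations, realized on rectangular matrices. -/
def matrixRep (φ : G →* Matrix m m k) (ψ : G →* Matrix n n k) :
    Representation k G (Matrix m n k) where
  toFun g :=
    { toFun M := φ g * M * (ψ g).transpose
      map_add' M M' := by rw [Matrix.mul_add, Matrix.add_mul]
      map_smul' a M := by simp }
  map_one' := by ext1 M; simp
  map_mul' g h := by ext1 M; simp [Matrix.mul_assoc]

lemma matrixRep_apply (φ : G →* Matrix m m k) (ψ : G →* Matrix n n k) (g : G)
    (M : Matrix m n k) : matrixRep φ ψ g M = φ g * M * (ψ g).transpose := rfl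

end MatrixRep

namespace FibonacciGroup

section Lift

variable {n : ℕ} {M : Type*} [Monoid M]

lemma exists_monoidHom {x : ZMod n → M} (hunit : ∀ i, IsUnit (x i))
    (hx : ∀ i, x i * x (i + 1) = x (i + 2)) :
    ∃ φ : FibonacciGroup n →* M, ∀ i, φ (gen i) = x i := by
  have hx' (i : ZMod n) : (hunit i).unit * (hunit (i + 1)).unit = (hunit (i + 2)).unit :=
    Units.ext (hx i)
  exact ⟨(Units.coeHom M).comp (lift hx'), fun i ↦ by simp⟩

lemma map_involution_eq (hn : Odd n) (φ : FibonacciGroup n →* M) {c : M}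
    (hc : φ (gen 1) * φ (gen 0) = c * φ (gen 2)) : φ (involution n) = c := by
  have h := gen_add_one_mul_gen hn 0
  rw [zero_add, zero_add] at h
  rwa [← map_mul, h, map_mul, ((Group.isUnit _).map φ).mul_left_inj] at hc

end Lift

section TwoNine

open Matrix

instance fact_prime_five : Fact (Nat.Prime 5) := ⟨Nat.prime_five⟩

/-- A matrix of order three whose conjugation action permutes the `quatMatrix i` cyclically. -/
def turnMatrix : Matrix (Fin 2) (Fin 2) (ZMod 5) := !![1, 1; 2, 3]

/-- Three anticommuting matrices of square `-1`, repeated with period three: the standard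
generators of the quaternion group in characteristic five. -/
def quatMatrix (i : ZMod 9) : Matrix (Fin 2) (Fin 2) (ZMod 5) :=
  turnMatrix ^ i.val * !![2, 0; 0, 3] * turnMatrix ^ (-i).val

/-- The matrix of the multiplication by `ω ^ 5 ^ i` on the field with `5 ^ 9` elements, in a normal
basis `u ^ 5 ^ j`, where `ω` is a primitive nineteenth root of unity. -/
def rootMatrix (i : ZMod 9) : Matrix (ZMod 9) (ZMod 9) (ZMod 5) :=
  submatrix
    !![1, 1, 1, 3, 3, 1, 3, 3, 2;
      1, 2, 3, 3, 1, 4, 3, 1, 2;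
      4, 0, 0, 2, 1, 3, 1, 1, 2;
      1, 0, 4, 1, 2, 3, 2, 2, 4;
      0, 0, 1, 4, 1, 0, 2, 3, 1;
      1, 2, 0, 1, 2, 3, 3, 1, 0;
      1, 1, 0, 0, 3, 1, 4, 4, 3;
      4, 0, 3, 1, 2, 3, 1, 0, 3;
      2, 2, 2, 4, 3, 1, 3, 0, 2] (· - i) (· - i)

/-- The values on the generators of a 1-cocycle for the tensor product of the representations given
by `quatMatrix` and `rootMatrix`. -/
def cocycleMatrix (i : ZMod 9) : Matrix (Fin 2) (ZMod 9) (ZMod 5) :=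
  turnMatrix ^ i.val *
    submatrix (α := ZMod 5) (l := Fin 2) (o := ZMod 9)
      !![1, 0, 0, 0, 0, 0, 0, 0, 0; 4, 0, 4, 0, 2, 1, 4, 3, 3] id (· - i)

lemma quatMatrix_mul_add_one (i : ZMod 9) :
    quatMatrix i * quatMatrix (i + 1) = quatMatrix (i + 2) := by
  revert i
  decide +kernel

lemma rootMatrix_mul_add_one (i : ZMod 9) :
    rootMatrix i * rootMatrix (i + 1) = rootMatrix (i + 2) := by
  revert i
  decide +kernel

lemma quatMatrix_mul_self (i : ZMod 9) : quatMatrix i * quatMatrix i = -1 := by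
  revert i
  decide +kernel

lemma quatMatrix_add_three (i : ZMod 9) : quatMatrix (i + 3) = quatMatrix i := by
  revert i
  decide +kernel

lemma rootMatrix_mul_add_three_mul_add_six (i : ZMod 9) :
    rootMatrix i * (rootMatrix (i + 3) * rootMatrix (i + 6)) = 1 := by
  revert i
  decide +kernel

lemma cocycleMatrix_add (i : ZMod 9) :
    cocycleMatrix i + quatMatrix i * cocycleMatrix (i + 1) * (rootMatrix i)ᵀ =
      cocycleMatrix (i + 2) := by
  revert i
  decide +kernel

lemma quatMatrix_one_mul_zero : quatMatrix 1 * quatMatrix 0 = -1 * quatMatrix 2 := by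
  decide +kernel

lemma rootMatrix_one_mul_zero : rootMatrix 1 * rootMatrix 0 = 1 * rootMatrix 2 := by
  decide +kernel

lemma cocycleMatrix_one_add : cocycleMatrix 1 + quatMatrix 1 * cocycleMatrix 0 * (rootMatrix 1)ᵀ =
    -cocycleMatrix 2 := by
  decide +kernel

lemma eq_smul_quatMatrix (A : Matrix (Fin 2) (Fin 2) (ZMod 5)) :
    A = (3 * (A 0 0 + A 1 1)) • (1 : Matrix (Fin 2) (Fin 2) (ZMod 5)) +
      (4 * (A 0 0 - A 1 1)) • quatMatrix 0 + (3 * (A 0 1 - A 1 0)) • quatMatrix 1 +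
      (4 * (A 0 1 + A 1 0)) • quatMatrix 2 := by
  obtain ⟨a, b, c, d, rfl⟩ : ∃ a b c d, A = !![a, b; c, d] := ⟨_, _, _, _, A.eta_fin_two⟩
  revert a b c d
  decide +kernel

lemma single_mul_turnMatrix_mul_cocycleMatrix (a : Fin 2) (i : ZMod 9) :
    single a 0 1 * turnMatrix ^ (-i).val * cocycleMatrix i = single a i 1 := by
  revert a i
  decide +kernel

variable {φ : FibonacciGroup 9 →* Matrix (Fin 2) (Fin 2) (ZMod 5)}
  {ψ : FibonacciGroup 9 →* Matrix (ZMod 9) (ZMod 9) (ZMod 5)}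
  {z : FibonacciGroup 9 → Matrix (Fin 2) (ZMod 9) (ZMod 5)}

lemma matrixRep_gen_mul_add_three_mul_add_six (hφ : ∀ i, φ (gen i) = quatMatrix i)
    (hψ : ∀ i, ψ (gen i) = rootMatrix i) (i : ZMod 9) (M : Matrix (Fin 2) (ZMod 9) (ZMod 5)) :
    matrixRep φ ψ (gen i * (gen (i + 3) * gen (i + 6))) M = -(quatMatrix i * M) := by
  have hq : quatMatrix (i + 6) = quatMatrix i := by
    rw [← quatMatrix_add_three i, ← quatMatrix_add_three (i + 3), add_assoc]
    rfl
  rw [matrixRep_apply]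
  simp only [map_mul, hφ, hψ, rootMatrix_mul_add_three_mul_add_six, quatMatrix_add_three, hq,
    quatMatrix_mul_self, transpose_one, Matrix.mul_one, Matrix.mul_neg, Matrix.neg_mul]

lemma mul_mem_span_range (hz : IsOneCocycle (matrixRep φ ψ) z)
    (hφ : ∀ i, φ (gen i) = quatMatrix i) (hψ : ∀ i, ψ (gen i) = rootMatrix i)
    (A : Matrix (Fin 2) (Fin 2) (ZMod 5)) {M : Matrix (Fin 2) (ZMod 9) (ZMod 5)}
    (hM : M ∈ Submodule.span (ZMod 5) (Set.range z)) :
    A * M ∈ Submodule.span (ZMod 5) (Set.range z) := by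
  have hquat (i : ZMod 9) : quatMatrix i * M ∈ Submodule.span (ZMod 5) (Set.range z) := by
    rw [← neg_mem_iff, ← matrixRep_gen_mul_add_three_mul_add_six hφ hψ]
    exact hz.apply_mem_span _ hM
  rw [eq_smul_quatMatrix A]
  simp only [Matrix.add_mul, Matrix.smul_mul, Matrix.one_mul]
  exact add_mem (add_mem (add_mem (Submodule.smul_mem _ _ hM) (Submodule.smul_mem _ _ (hquat 0)))
    (Submodule.smul_mem _ _ (hquat 1))) (Submodule.smul_mem _ _ (hquat 2))

lemma span_range_eq_top (hz : IsOneCocycle (matrixRep φ ψ) z)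
    (hφ : ∀ i, φ (gen i) = quatMatrix i) (hψ : ∀ i, ψ (gen i) = rootMatrix i)
    (hzm : ∀ i, z (gen i) = cocycleMatrix i) :
    Submodule.span (ZMod 5) (Set.range z) = ⊤ := by
  refine Submodule.eq_top_iff'.2 fun M ↦ ?_
  rw [matrix_eq_sum_single M]
  refine sum_mem fun a _ ↦ sum_mem fun i _ ↦ ?_
  rw [← mul_one (M a i), ← smul_eq_mul, ← smul_single,
    ← single_mul_turnMatrix_mul_cocycleMatrix, ← hzm]
  exact Submodule.smul_mem _ _ (mul_mem_span_range hz hφ hψ _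
    (Submodule.subset_span (Set.mem_range_self _)))

lemma exists_isSpanningCocycle :
    ∃ (ρ : Representation (ZMod 5) (FibonacciGroup 9) (Matrix (Fin 2) (ZMod 9) (ZMod 5)))
      (z : FibonacciGroup 9 → Matrix (Fin 2) (ZMod 9) (ZMod 5)), IsSpanningCocycle ρ z := by
  have hn : Odd 9 := by decide
  obtain ⟨φ, hφ⟩ := exists_monoidHom
    (fun i ↦ .of_mul_eq_one (-quatMatrix i) (by rw [mul_neg, quatMatrix_mul_self, neg_neg]))
    quatMatrix_mul_add_one
  obtain ⟨ψ, hψ⟩ := exists_monoidHom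
    (fun i ↦ .of_mul_eq_one _ (rootMatrix_mul_add_three_mul_add_six i)) rootMatrix_mul_add_one
  have hφc : φ (involution 9) = -1 := map_involution_eq hn φ (by
    rw [hφ, hφ, hφ, quatMatrix_one_mul_zero])
  have hψc : ψ (involution 9) = 1 := map_involution_eq hn ψ (by
    rw [hψ, hψ, hψ, rootMatrix_one_mul_zero])
  have hρc : matrixRep φ ψ (involution 9) = -1 := by
    ext1 M
    simp [matrixRep_apply, hφc, hψc]
  obtain ⟨z, hz, hzm⟩ := exists_isOneCocycle (ρ := matrixRep φ ψ) (m := cocycleMatrix) (by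
    ext1 i
    rw [foxMap_apply, matrixRep_apply, hφ, hψ, cocycleMatrix_add, sub_self, Pi.zero_apply])
  refine ⟨matrixRep φ ψ, z, hz, hρc, ?_, span_range_eq_top hz hφ hψ hzm⟩
  have h : z (gen 1 * gen 0) = z (involution 9 * gen 2) := congrArg z (gen_add_one_mul_gen hn 0)
  rw [hz, hz, hρc, hzm, hzm, hzm, matrixRep_apply, hφ, hψ, cocycleMatrix_one_add] at h
  simpa using h.symm

end TwoNine

end FibonacciGroup

section ClosurePair

open Subgroup

variable {A : Type*} {x y : A}

lemma closure_mk_pair [Group A] (htop : closure {x, y} = ⊤) (N : Subgroup A) [N.Normal] :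
    closure {(x : A ⧸ N), (y : A ⧸ N)} = ⊤ := by
  have h := congrArg (map (QuotientGroup.mk' N)) htop
  rwa [MonoidHom.map_closure, Set.image_pair,
    map_top_of_surjective _ (QuotientGroup.mk'_surjective _)] at h

lemma isMulCommutative_of_closure_pair [Group A] (htop : closure {x, y} = ⊤)
    (hxy : x * y = y * x) : IsMulCommutative A := by
  have hcomm : IsMulCommutative (closure {x, y}) := isMulCommutative_closure (by simp [hxy])
  exact ⟨⟨fun p q ↦ congrArg Subtype.val
    (hcomm.is_comm.comm ⟨p, htop.ge (mem_top p)⟩ ⟨q, htop.ge (mem_top q)⟩)⟩⟩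

lemma card_dvd_mul_of_closure_pair [CommGroup A] {m n : ℕ} (htop : closure {x, y} = ⊤)
    (hx : x ^ m ∈ zpowers y) (hy : y ^ n = 1) : Nat.card A ∣ m * n := by
  have hcyclic : zpowers (x : A ⧸ zpowers y) = ⊤ := by
    rw [← closure_mk_pair htop, (QuotientGroup.eq_one_iff y).2 (mem_zpowers y), Set.pair_comm,
      closure_insert_one]
    exact zpowers_eq_closure _
  rw [card_eq_card_quotient_mul_card_subgroup (zpowers y), Nat.card_zpowers,
    ← orderOf_eq_card_of_zpowers_eq_top hcyclic]
  refine mul_dvd_mul (orderOf_dvd_of_pow_eq_one ?_) (orderOf_dvd_of_pow_eq_one hy)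
  rwa [← QuotientGroup.mk_pow, QuotientGroup.eq_one_iff]

end ClosurePair

section CommutativeFibonacci

variable {A : Type*}

lemma natCast_add_one_eq_fib_smul [AddCommGroup A] {n : ℕ} {x : ZMod n → A}
    (hx : ∀ i, x i + x (i + 1) = x (i + 2)) (j : ℕ) :
    x (j + 1) = Nat.fib j • x 0 + Nat.fib (j + 1) • x 1 := by
  induction j using Nat.twoStepInduction with
  | zero => simp
  | one => rw [Nat.cast_one, one_add_one_eq_two, ← zero_add 2, ← hx]; simp
  | more j ih₀ ih₁ =>
    have h := hx (j + 1)
    rw [ih₀, show (j : ZMod n) + 1 + 1 = (j + 1 : ℕ) + 1 by push_cast; rfl, ih₁] at h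
    rw [show ((j + 2 : ℕ) : ZMod n) + 1 = j + 1 + 2 by push_cast; ring, ← h,
      Nat.fib_add_two (n := j + 1), Nat.fib_add_two (n := j)]
    module

lemma two_smul_eq_eight_smul [AddCommGroup A] {x : ZMod 9 → A}
    (hx : ∀ i, x i + x (i + 1) = x (i + 2)) : 2 • x 0 = 8 • x 1 := by
  have h₀ : x 0 = 21 • x 0 + 34 • x 1 := natCast_add_one_eq_fib_smul hx 8
  have h₁ : x 1 = 34 • x 0 + 55 • x 1 := natCast_add_one_eq_fib_smul hx 9
  linear_combination (norm := module) (5 : ℤ) • h₀ - (3 : ℤ) • h₁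

lemma thirty_eight_smul_eq_zero [AddCommGroup A] {x : ZMod 9 → A}
    (hx : ∀ i, x i + x (i + 1) = x (i + 2)) : 38 • x 1 = 0 := by
  have h₀ : x 0 = 21 • x 0 + 34 • x 1 := natCast_add_one_eq_fib_smul hx 8
  have h₁ : x 1 = 34 • x 0 + 55 • x 1 := natCast_add_one_eq_fib_smul hx 9
  linear_combination (norm := module) (10 : ℤ) • h₁ - (17 : ℤ) • h₀

lemma card_dvd_seventy_six [CommGroup A] {x : ZMod 9 → A}
    (hx : ∀ i, x i * x (i + 1) = x (i + 2)) (htop : Subgroup.closure {x 0, x 1} = ⊤) :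
    Nat.card A ∣ 76 := by
  have h₀ : x 0 ^ 2 = x 1 ^ 8 := two_smul_eq_eight_smul (A := Additive A) hx
  have h₁ : x 1 ^ 38 = 1 := thirty_eight_smul_eq_zero (A := Additive A) hx
  exact card_dvd_mul_of_closure_pair htop (h₀.symm ▸ Subgroup.npow_mem_zpowers (x 1) 8) h₁

end CommutativeFibonacci

namespace FibonacciGroup

section Generation

variable {n : ℕ}

lemma closure_gen_zero_gen_one [NeZero n] :
    Subgroup.closure {gen 0, gen 1} = (⊤ : Subgroup (FibonacciGroup n)) := by
  refine (Subgroup.eq_top_iff' _).2 (mem_of_gen_mem fun i ↦ ?_)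
  obtain ⟨j, rfl⟩ := ZMod.natCast_zmod_surjective i
  induction j using Nat.twoStepInduction with
  | zero => exact Subgroup.subset_closure (by simp)
  | one => exact Subgroup.subset_closure (by simp)
  | more j ih₀ ih₁ =>
    push_cast at ih₁ ⊢
    rw [← gen_mul_gen]
    exact mul_mem ih₀ ih₁

lemma surjective_of_gen_zero_mem_of_gen_one_mem [NeZero n] {H : Type*} [Group H]
    {φ : H →* FibonacciGroup n} (h₀ : gen 0 ∈ φ.range) (h₁ : gen 1 ∈ φ.range) :
    Function.Surjective φ := by
  rw [← MonoidHom.range_eq_top, ← top_le_iff, ← closure_gen_zero_gen_one, Subgroup.closure_le]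
  exact Set.pair_subset h₀ h₁

lemma mk_gen_mul_comm (hn : Odd n) :
    ((gen 0 * gen 1 : FibonacciGroup n) :
      FibonacciGroup n ⧸ Subgroup.normalClosure {involution n}) =
      (gen 1 * gen 0 : FibonacciGroup n) := by
  have hc : (involution n : FibonacciGroup n ⧸ Subgroup.normalClosure {involution n}) = 1 :=
    (QuotientGroup.eq_one_iff _).2 (Subgroup.subset_normalClosure rfl)
  have h := gen_add_one_mul_gen hn 0
  rw [zero_add, zero_add, ← zero_add (2 : ZMod n), ← gen_mul_gen, zero_add] at h
  rw [h, QuotientGroup.mk_mul _ (involution n), hc, one_mul]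

lemma card_quotient_core_dvd (hn : Odd n) : Nat.card (FibonacciGroup n ⧸ core n) ∣
    2 * Nat.card (FibonacciGroup n ⧸ Subgroup.normalClosure {involution n}) := by
  rw [← Subgroup.index, ← Subgroup.index,
    ← Subgroup.relIndex_mul_index (commutatorClosure_le_normalClosure (involution n)),
    relIndex_commutatorClosure]
  refine mul_dvd_mul_right (orderOf_dvd_of_pow_eq_one ?_) _
  rw [← QuotientGroup.mk_pow, pow_two, involution_mul_self hn, QuotientGroup.mk_one]

end Generation

open scoped IsMulCommutative in
lemma card_quotient_normalClosure_involution_dvd :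
    Nat.card (FibonacciGroup 9 ⧸ Subgroup.normalClosure {involution 9}) ∣ 76 := by
  have htop := closure_mk_pair closure_gen_zero_gen_one (Subgroup.normalClosure {involution 9})
  have := isMulCommutative_of_closure_pair htop (mk_gen_mul_comm (by decide))
  exact card_dvd_seventy_six
    (x := fun i ↦ (gen i : FibonacciGroup 9 ⧸ Subgroup.normalClosure {involution 9}))
    (fun i ↦ congrArg QuotientGroup.mk (gen_mul_gen i)) htop

theorem infinite_nine : Infinite (FibonacciGroup 9) := by
  obtain ⟨ρ, z, hz⟩ := exists_isSpanningCocycle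
  have hcard : Nat.card (FibonacciGroup 9 ⧸ core 9) ∣ 152 :=
    (card_quotient_core_dvd (by decide)).trans
      (mul_dvd_mul_left 2 card_quotient_normalClosure_involution_dvd)
  have : NeZero (2 : ZMod 5) := ⟨by decide⟩
  have : NeZero (Nat.card (FibonacciGroup 9 ⧸ core 9) : ZMod 5) :=
    ⟨fun h ↦ absurd (((ZMod.natCast_eq_zero_iff _ _).1 h).trans hcard) (by decide)⟩
  have : NeZero (Nat.card (FibonacciGroup 9 ⧸ Subgroup.normalClosure {involution 9}) : ZMod 5) :=
    ⟨fun h ↦ absurd (((ZMod.natCast_eq_zero_iff _ _).1 h).trans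
      card_quotient_normalClosure_involution_dvd) (by decide)⟩
  refine infinite_of_isSpanningCocycle (by decide) hz ?_
  have hle := Nat.le_of_dvd (by decide) hcard
  rw [Module.finrank_matrix, Module.finrank_self, Fintype.card_fin, ZMod.card]
  linarith

end FibonacciGroup

lemma lift_eq_one_of_mem_fibTwoRels {H : Type*} [Group H] {x : ZMod 9 → H}
    (hx : ∀ i, x i * x (i + 1) = x (i + 2)) {r : FreeGroup (Fin 2)} (hr : r ∈ fibTwoRels) :
    FreeGroup.lift ![x 0, x 1] r = 1 := by
  have h2 : x 2 = x 0 * x 1 := (hx 0).symm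
  have h3 : x 3 = x 1 * x 2 := (hx 1).symm
  have h4 : x 4 = x 2 * x 3 := (hx 2).symm
  have h5 : x 5 = x 3 * x 4 := (hx 3).symm
  have h8 : x 8 = x 1 * (x 0)⁻¹ := eq_mul_inv_of_mul_eq (hx 8)
  have h7 : x 7 = x 0 * (x 8)⁻¹ := eq_mul_inv_of_mul_eq (hx 7)
  have h6 : x 6 = x 8 * (x 7)⁻¹ := eq_mul_inv_of_mul_eq (hx 6)
  have h56 : x 5 * x 6 = x 7 := hx 5
  have h45 : x 4 * x 5 = x 6 := hx 4
  obtain rfl | rfl := hr <;>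
    simp only [map_mul, map_pow, map_inv, FreeGroup.lift_apply_of, Matrix.cons_val_zero,
      Matrix.cons_val_one]
  · rw [← mul_inv_eq_one.2 h56, h6, h7, h8, h5, h4, h3, h2]
    simp [pow_two, mul_assoc]
  · rw [← mul_inv_eq_one.2 h45, h6, h7, h8, h5, h4, h3, h2]
    simp [pow_two, mul_assoc]

theorem fib_two_nine_infinite : Infinite (PresentedGroup fibTwoRels) := by
  let φ : PresentedGroup fibTwoRels →* FibonacciGroup 9 :=
    PresentedGroup.toGroup fun _ ↦ lift_eq_one_of_mem_fibTwoRels FibonacciGroup.gen_mul_gen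
  have hφ : Function.Surjective φ :=
    FibonacciGroup.surjective_of_gen_zero_mem_of_gen_one_mem
      ⟨.of 0, PresentedGroup.toGroup.of _⟩ ⟨.of 1, PresentedGroup.toGroup.of _⟩
  have := FibonacciGroup.infinite_nine
  exact .of_surjective φ hφ
end
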